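/- For every 0 < τ < √2, every integer T ≥ 1, and every ε > 0, there exists d₀ such that the following holds for all d ≥ d₀. Let w₁, …, w_m ≥ 0 with Σᵢ wᵢ = 1, and let h₁, …, h_m be measurable functions on the unit sphere S^{d−1} (with normalized Haar/uniform measure μ) such that each hᵢ takes at most T distinct values and each level set of each hᵢ has measure at most 1/2. Define p₂* = Σᵢ wᵢ · Pr_{u,v ~ μ, independent}[hᵢ(u) = hᵢ(v)], and let η ∈ ℝ satisfy Φ_c(η) = p₂*. Then for every pair p, q ∈ S^{d−1} with ‖p − q‖ ≤ τ: Σᵢ wᵢ · 1[hᵢ(p) = hᵢ(q)] being at least p₁ for all such pairs forces p₁ ≤ Λ(τ, η) + ε; equivalently, inf_{p,q ∈ S^{d−1}, ‖p−q‖ ≤ τ} Σᵢ wᵢ · 1[hᵢ(p) = hᵢ(q)] ≤ Λ(τ, η) + ε. -/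

import Mathlib

open MeasureTheory ProbabilityTheory Real
open scoped Classical

noncomputable section

/-- The normalized uniform (Haar) measure on the unit sphere `S^{d-1} ⊆ ℝ^d`. -/
def sphereMeasure (d : ℕ) : Measure (Metric.sphere (0 : EuclideanSpace ℝ (Fin d)) 1) :=
  ((volume : Measure (EuclideanSpace ℝ (Fin d))).toSphere Set.univ)⁻¹
    • (volume : Measure (EuclideanSpace ℝ (Fin d))).toSphere

/-- `Φ_c(η) = Pr_{X ~ N(0,1)}[X ≥ η]`. -/
def gaussTail (η : ℝ) : ℝ := (gaussianReal 0 1 (Set.Ici η)).toReal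

/-- `Λ(τ, η) = Pr[X ≥ η ∧ (1 - τ²/2)X + √(τ² - τ⁴/4)·Y ≥ η] / Φ_c(η)` for independent
standard Gaussians `X, Y`. -/
def lambdaFn (τ η : ℝ) : ℝ :=
  (((gaussianReal 0 1).prod (gaussianReal 0 1))
      {z : ℝ × ℝ | η ≤ z.1 ∧
        η ≤ (1 - τ ^ 2 / 2) * z.1 + Real.sqrt (τ ^ 2 - τ ^ 4 / 4) * z.2}).toReal
    / gaussTail η

/-!
A standard Gaussian vector projects radially to a uniform point of the sphere. When
`ρ > 1 - τ² / 2`, the projections of `ρ`-correlated Gaussian vectors are at distance at most `τ`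
with probability tending to `1` with the dimension, so up to `o(1)` the infimum of the collision
probability is at most its average over such pairs. Each level set contributes to this average at
most what a half-line of the same Gaussian measure would (Borell's inequality), and since level sets
have measure at most `1 / 2`, a concavity argument merges all of them into a single half-line, of
measure `p₂*`. Letting `ρ` decrease to `1 - τ² / 2` gives `Λ(τ, η)`.

Borell's inequality follows from its infinitesimal version on `ρ`-correlated random signs: the
defects add up along a random walk with such steps, the total vanishes as the steps become small,
and the walk converges to a pair of correlated Gaussian vectors.
-/

namespace LSH

open Set Filter Topology
open scoped NNReal RealInnerProductSpace

local notation "φ" => gaussianPDFReal 0 1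

/-! ### The Gaussian tail and its inverse -/

lemma stdGaussianPDF_eq (x : ℝ) : φ x = (√(2 * π))⁻¹ * exp (-x ^ 2 / 2) := by
  simp [gaussianPDFReal]

lemma stdGaussianPDF_pos (x : ℝ) : 0 < φ x := gaussianPDFReal_pos _ _ _ one_ne_zero

lemma hasDerivAt_stdGaussianPDF (x : ℝ) : HasDerivAt φ (-x * φ x) x := by
  rw [funext stdGaussianPDF_eq]
  refine ((((hasDerivAt_id x).pow 2).neg.div_const 2).exp.const_mul (√(2 * π))⁻¹).congr_deriv ?_
  simp only [id_eq, Pi.neg_apply, Pi.pow_apply]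
  ring

lemma continuous_stdGaussianPDF : Continuous φ :=
  continuous_iff_continuousAt.2 fun x ↦ (hasDerivAt_stdGaussianPDF x).continuousAt

lemma gaussTail_eq_integral_Ioi (x : ℝ) : gaussTail x = ∫ u in Ioi x, φ u := by
  rw [gaussTail, gaussianReal_apply_eq_integral _ one_ne_zero, integral_Ici_eq_integral_Ioi,
    ENNReal.toReal_ofReal (integral_nonneg fun u ↦ gaussianPDFReal_nonneg _ _ _)]

lemma hasDerivAt_integral_Ioi {f : ℝ → ℝ} (hf : Continuous f) (hInt : Integrable f) (x : ℝ) :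
    HasDerivAt (fun y ↦ ∫ u in Ioi y, f u) (-f x) x := by
  have h : (fun y ↦ ∫ u in Ioi y, f u) = fun y ↦ (∫ u in Ioi 0, f u) - ∫ u in 0..y, f u := by
    funext y
    rw [← intervalIntegral.integral_Ioi_sub_Ioi' hInt.integrableOn hInt.integrableOn,
      sub_sub_cancel]
  rw [h]
  exact (intervalIntegral.integral_hasDerivAt_right (hf.intervalIntegrable _ _)
    (hf.stronglyMeasurableAtFilter _ _) hf.continuousAt).const_sub _

lemma hasDerivAt_gaussTail (x : ℝ) : HasDerivAt gaussTail (-φ x) x := by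
  rw [funext gaussTail_eq_integral_Ioi]
  exact hasDerivAt_integral_Ioi continuous_stdGaussianPDF (integrable_gaussianPDFReal 0 1) x

lemma continuous_gaussTail : Continuous gaussTail :=
  continuous_iff_continuousAt.2 fun x ↦ (hasDerivAt_gaussTail x).continuousAt

lemma strictAnti_gaussTail : StrictAnti gaussTail :=
  strictAnti_of_deriv_neg fun x ↦ by
    rw [(hasDerivAt_gaussTail x).deriv, neg_lt_zero]
    exact stdGaussianPDF_pos x

lemma gaussTail_neg_eq_cdf (x : ℝ) : gaussTail (-x) = cdf (gaussianReal 0 1) x := by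
  have h := gaussianReal_map_neg (μ := 0) (v := 1)
  rw [neg_zero] at h
  rw [cdf_eq_real, gaussTail, measureReal_def]
  nth_rw 1 [← h]
  rw [Measure.map_apply measurable_neg measurableSet_Ici, neg_preimage, neg_Ici, neg_neg]

lemma gaussTail_neg (x : ℝ) : gaussTail (-x) = 1 - gaussTail x := by
  have : NullSingletonClass (gaussianReal 0 1) := nullSingletonClass_gaussianReal one_ne_zero
  rw [gaussTail_neg_eq_cdf, cdf_eq_real, measureReal_def, ← measure_congr Iio_ae_eq_Iic,
    ← compl_Ici]
  exact probReal_compl_eq_one_sub measurableSet_Ici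

lemma gaussTail_zero : gaussTail 0 = 1 / 2 := by
  have h := gaussTail_neg 0
  rw [neg_zero] at h
  linarith

lemma gaussTail_pos (x : ℝ) : 0 < gaussTail x :=
  ENNReal.toReal_nonneg.trans_lt (strictAnti_gaussTail (lt_add_one x))

lemma gaussTail_lt_one (x : ℝ) : gaussTail x < 1 := by
  linarith [gaussTail_pos (-x), gaussTail_neg x]

lemma tendsto_gaussTail_atTop : Tendsto gaussTail atTop (𝓝 0) := by
  refine ((tendsto_cdf_atBot (gaussianReal 0 1)).comp tendsto_neg_atTop_atBot).congr fun x ↦ ?_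
  rw [Function.comp_apply, ← gaussTail_neg_eq_cdf, neg_neg]

lemma exists_gaussTail_eq {y : ℝ} (hy : y ∈ Ioo 0 1) : ∃ x, gaussTail x = y := by
  obtain ⟨a, ha⟩ := (tendsto_gaussTail_atTop.eventually (gt_mem_nhds hy.1)).exists
  obtain ⟨b, hb⟩ := (tendsto_gaussTail_atTop.eventually (gt_mem_nhds (sub_pos.2 hy.2))).exists
  refine mem_range_of_exists_le_of_exists_ge continuous_gaussTail ⟨a, ha.le⟩ ⟨-b, ?_⟩
  linarith [gaussTail_neg b]

/-- The inverse of `gaussTail` on `(0, 1)`, i.e. the quantile function of the standard Gaussian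
reflected in `1 / 2`; its values outside `(0, 1)` are junk. -/
def tailQuantile : ℝ → ℝ := Function.invFun gaussTail

lemma gaussTail_tailQuantile {y : ℝ} (hy : y ∈ Ioo 0 1) : gaussTail (tailQuantile y) = y :=
  Function.invFun_eq (exists_gaussTail_eq hy)

lemma tailQuantile_gaussTail (x : ℝ) : tailQuantile (gaussTail x) = x :=
  Function.leftInverse_invFun strictAnti_gaussTail.injective x

lemma hasDerivAt_tailQuantile {y : ℝ} (hy : y ∈ Ioo 0 1) :
    HasDerivAt tailQuantile (-(φ (tailQuantile y))⁻¹) y := by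
  have hstrict : HasStrictDerivAt gaussTail (-φ (tailQuantile y)) (tailQuantile y) :=
    hasStrictDerivAt_of_hasDerivAt_of_continuousAt (.of_forall hasDerivAt_gaussTail)
      continuous_stdGaussianPDF.neg.continuousAt
  have h := hstrict.to_local_left_inverse (neg_ne_zero.2 (stdGaussianPDF_pos _).ne')
    (.of_forall tailQuantile_gaussTail)
  rw [gaussTail_tailQuantile hy, inv_neg] at h
  exact h.hasDerivAt

lemma continuousOn_tailQuantile : ContinuousOn tailQuantile (Ioo 0 1) :=
  fun _ hy ↦ (hasDerivAt_tailQuantile hy).continuousAt.continuousWithinAt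

/-! ### Correlated Gaussian vectors -/

section CorrelatedGaussian

variable (E : Type*) [NormedAddCommGroup E] [InnerProductSpace ℝ E] [FiniteDimensional ℝ E]
  [MeasurableSpace E] [BorelSpace E]

/-- The law of `(X, ρ X + √(1 - ρ²) Z)` for independent standard Gaussian vectors `X`, `Z`: a pair
of `ρ`-correlated standard Gaussian vectors when `|ρ| ≤ 1`. -/
def correlatedGaussian (ρ : ℝ) : Measure (E × E) :=
  ((stdGaussian E).prod (stdGaussian E)).map fun z ↦ (z.1, ρ • z.1 + √(1 - ρ ^ 2) • z.2)

instance (ρ : ℝ) : IsProbabilityMeasure (correlatedGaussian E ρ) :=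
  Measure.isProbabilityMeasure_map (by fun_prop)

lemma map_fst_correlatedGaussian (ρ : ℝ) :
    (correlatedGaussian E ρ).map Prod.fst = stdGaussian E := by
  rw [correlatedGaussian, Measure.map_map measurable_fst (by fun_prop)]
  exact measurePreserving_fst.map_eq

variable {E}

lemma charFun_correlatedGaussian {ρ : ℝ} (hρ : ρ ^ 2 ≤ 1) (t u : E) :
    charFun ((correlatedGaussian E ρ).map (WithLp.toLp 2)) (WithLp.toLp 2 (t, u))
      = Complex.exp (-(‖t‖ ^ 2 + 2 * ρ * ⟪t, u⟫ + ‖u‖ ^ 2 : ℝ) / 2) := by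
  set v : WithLp 2 (E × E) := WithLp.toLp 2 (t + ρ • u, √(1 - ρ ^ 2) • u)
  have hinner (z : E × E) :
      ⟪WithLp.toLp 2 (z.1, ρ • z.1 + √(1 - ρ ^ 2) • z.2), WithLp.toLp 2 (t, u)⟫
        = ⟪WithLp.toLp 2 z, v⟫ := by
    simp only [v, WithLp.prod_inner_apply, inner_add_left, inner_add_right, inner_smul_left,
      inner_smul_right, conj_trivial]
    ring
  have hnorm : ‖t + ρ • u‖ ^ 2 + ‖√(1 - ρ ^ 2) • u‖ ^ 2
      = ‖t‖ ^ 2 + 2 * ρ * ⟪t, u⟫ + ‖u‖ ^ 2 := by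
    simp only [norm_add_sq_real, norm_smul, mul_pow, inner_smul_right, norm_eq_abs, sq_abs,
      sq_sqrt (sub_nonneg.2 hρ)]
    ring
  have hcharFun : charFun ((correlatedGaussian E ρ).map (WithLp.toLp 2)) (WithLp.toLp 2 (t, u))
      = charFun (((stdGaussian E).prod (stdGaussian E)).map (WithLp.toLp 2)) v := by
    rw [correlatedGaussian, Measure.map_map (by fun_prop) (by fun_prop), charFun_apply,
      charFun_apply, integral_map (by fun_prop) (by fun_prop), integral_map (by fun_prop)
      (by fun_prop)]
    simp only [Function.comp_apply, hinner]
  rw [hcharFun, charFun_prod, charFun_stdGaussian, charFun_stdGaussian, ← Complex.exp_add, ← hnorm]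
  push_cast
  congr 1
  ring

lemma map_swap_correlatedGaussian {ρ : ℝ} (hρ : ρ ^ 2 ≤ 1) :
    (correlatedGaussian E ρ).map Prod.swap = correlatedGaussian E ρ := by
  suffices h : ((correlatedGaussian E ρ).map Prod.swap).map (WithLp.toLp 2)
      = (correlatedGaussian E ρ).map (WithLp.toLp 2) from
    (MeasurableEquiv.toLp 2 (E × E)).map_measurableEquiv_injective h
  refine Measure.ext_of_charFun (funext fun w ↦ ?_)
  obtain ⟨⟨t, u⟩, rfl⟩ := WithLp.toLp_surjective 2 w
  have hinner (z : E × E) :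
      ⟪WithLp.toLp 2 z.swap, WithLp.toLp 2 (t, u)⟫ = ⟪WithLp.toLp 2 z, WithLp.toLp 2 (u, t)⟫ := by
    simp only [WithLp.prod_inner_apply, Prod.fst_swap, Prod.snd_swap]
    exact add_comm _ _
  have hswap : charFun (((correlatedGaussian E ρ).map Prod.swap).map (WithLp.toLp 2))
      (WithLp.toLp 2 (t, u))
        = charFun ((correlatedGaussian E ρ).map (WithLp.toLp 2)) (WithLp.toLp 2 (u, t)) := by
    rw [Measure.map_map (by fun_prop) (by fun_prop), charFun_apply, charFun_apply,
      integral_map (by fun_prop) (by fun_prop), integral_map (by fun_prop) (by fun_prop)]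
    simp only [Function.comp_apply, hinner]
  rw [hswap, charFun_correlatedGaussian hρ, charFun_correlatedGaussian hρ, real_inner_comm t u]
  congr 3
  exact congrArg Complex.ofReal (by ring)

lemma map_snd_correlatedGaussian {ρ : ℝ} (hρ : ρ ^ 2 ≤ 1) :
    (correlatedGaussian E ρ).map Prod.snd = stdGaussian E := by
  rw [← map_swap_correlatedGaussian hρ, Measure.map_map measurable_snd measurable_swap]
  exact map_fst_correlatedGaussian E ρ

end CorrelatedGaussian

lemma stdGaussian_real : stdGaussian ℝ = gaussianReal 0 1 := by
  refine Measure.ext_of_charFun (funext fun t ↦ ?_)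
  rw [charFun_stdGaussian, charFun_gaussianReal, norm_eq_abs, ← Complex.ofReal_pow, sq_abs]
  simp [neg_div]

/-! ### The Borell functional -/

section BorellFn

/-- The Borell functional: `P[U(X) ≤ x, U(Y) ≤ y]` for `ρ`-correlated standard Gaussians `X`, `Y`,
where `U = gaussTail`. For `x, y ∈ (0, 1)` this is the probability that `X` and `Y` lie in the upper
half-lines of Gaussian measure `x` and `y`, see `borellFn_gaussTail`. -/
def borellFn (ρ x y : ℝ) : ℝ :=
  (correlatedGaussian ℝ ρ).real {z | gaussTail z.1 ≤ x ∧ gaussTail z.2 ≤ y}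

variable {ρ : ℝ}

lemma borellFn_gaussTail (ρ a b : ℝ) :
    borellFn ρ (gaussTail a) (gaussTail b)
      = (correlatedGaussian ℝ ρ).real {z | a ≤ z.1 ∧ b ≤ z.2} := by
  simp only [borellFn, strictAnti_gaussTail.le_iff_ge]

lemma measurableSet_gaussTail_le (x : ℝ) : MeasurableSet {u | gaussTail u ≤ x} :=
  measurableSet_le continuous_gaussTail.measurable measurable_const

lemma borellFn_comm (hρ : ρ ^ 2 ≤ 1) (x y : ℝ) : borellFn ρ x y = borellFn ρ y x := by
  have hmeas : MeasurableSet {z : ℝ × ℝ | gaussTail z.1 ≤ x ∧ gaussTail z.2 ≤ y} :=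
    (measurableSet_gaussTail_le x).prod (measurableSet_gaussTail_le y)
  rw [borellFn, ← map_swap_correlatedGaussian hρ, map_measureReal_apply measurable_swap hmeas]
  exact congrArg _ (ext fun z ↦ and_comm)

lemma borellFn_mono {x x' y y' : ℝ} (hx : x ≤ x') (hy : y ≤ y') :
    borellFn ρ x y ≤ borellFn ρ x' y' :=
  measureReal_mono fun _ hz ↦ ⟨hz.1.trans hx, hz.2.trans hy⟩

lemma borellFn_zero_left (ρ y : ℝ) : borellFn ρ 0 y = 0 := by
  simp [borellFn, (gaussTail_pos _).not_ge]

lemma stdGaussian_real_gaussTail_le (x : ℝ) :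
    (stdGaussian ℝ).real {u | gaussTail u ≤ x} = max (min x 1) 0 := by
  rw [stdGaussian_real]
  rcases le_or_gt x 0 with hx0 | hx0
  · simp [(hx0.trans_lt (gaussTail_pos _)).not_ge, hx0]
  rcases le_or_gt 1 x with hx1 | hx1
  · simp [(gaussTail_lt_one _).le.trans hx1, hx1]
  obtain ⟨a, rfl⟩ := exists_gaussTail_eq ⟨hx0, hx1⟩
  simp only [strictAnti_gaussTail.le_iff_ge, min_eq_left hx1.le, max_eq_left hx0.le]
  rfl

lemma borellFn_sub_le {x x' : ℝ} (h : x ≤ x') (y : ℝ) :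
    borellFn ρ x' y - borellFn ρ x y ≤ x' - x := by
  have hmarginal (t : ℝ) : (correlatedGaussian ℝ ρ).real {z | gaussTail z.1 ≤ t}
      = max (min t 1) 0 := by
    rw [← stdGaussian_real_gaussTail_le, ← map_fst_correlatedGaussian ℝ ρ,
      map_measureReal_apply measurable_fst (measurableSet_gaussTail_le t)]
    rfl
  have hsub : {z : ℝ × ℝ | gaussTail z.1 ≤ x' ∧ gaussTail z.2 ≤ y} ⊆
      {z | gaussTail z.1 ≤ x ∧ gaussTail z.2 ≤ y}
        ∪ ({z | gaussTail z.1 ≤ x'} \ {z | gaussTail z.1 ≤ x}) := fun z hz ↦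
    (le_or_gt (gaussTail z.1) x).imp (⟨·, hz.2⟩) (⟨hz.1, ·.not_ge⟩)
  calc borellFn ρ x' y - borellFn ρ x y
    _ ≤ (correlatedGaussian ℝ ρ).real ({z | gaussTail z.1 ≤ x'} \ {z | gaussTail z.1 ≤ x}) :=
      sub_le_iff_le_add'.2 ((measureReal_mono hsub).trans (measureReal_union_le _ _))
    _ = max (min x' 1) 0 - max (min x 1) 0 := by
      have hle : {z : ℝ × ℝ | gaussTail z.1 ≤ x} ⊆ {z | gaussTail z.1 ≤ x'} :=
        fun z hz ↦ le_trans hz h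
      rw [measureReal_sdiff hle (measurable_fst (measurableSet_gaussTail_le x)), hmarginal,
        hmarginal]
    _ ≤ |min x' 1 - min x 1| := (le_abs_self _).trans (abs_max_sub_max_le_abs _ _ _)
    _ ≤ max |x' - x| |1 - 1| := abs_min_sub_min_le_max _ _ _ _
    _ = x' - x := by simp [h]

lemma abs_borellFn_sub_le_left (x x' y : ℝ) : |borellFn ρ x' y - borellFn ρ x y| ≤ |x' - x| := by
  wlog h : x ≤ x' generalizing x x'
  · rw [abs_sub_comm, abs_sub_comm x']
    exact this x' x (le_of_not_ge h)
  rw [abs_of_nonneg (sub_nonneg.2 (borellFn_mono h le_rfl)), abs_of_nonneg (sub_nonneg.2 h)]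
  exact borellFn_sub_le h y

lemma abs_borellFn_sub_le (hρ : ρ ^ 2 ≤ 1) (x y x' y' : ℝ) :
    |borellFn ρ x' y' - borellFn ρ x y| ≤ |x' - x| + |y' - y| := by
  have hright : |borellFn ρ x y' - borellFn ρ x y| ≤ |y' - y| := by
    rw [borellFn_comm hρ x, borellFn_comm hρ x]
    exact abs_borellFn_sub_le_left y y' x
  exact (abs_sub_le _ (borellFn ρ x y') _).trans
    (add_le_add (abs_borellFn_sub_le_left x x' y') hright)

lemma continuous_borellFn (hρ : ρ ^ 2 ≤ 1) : Continuous fun p : ℝ × ℝ ↦ borellFn ρ p.1 p.2 := by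
  refine (LipschitzWith.of_dist_le_mul (K := 2) fun p q ↦ ?_).continuous
  rw [NNReal.coe_ofNat, two_mul, Real.dist_eq]
  exact (abs_borellFn_sub_le hρ _ _ _ _).trans
    (add_le_add (le_max_left _ _) (le_max_right _ _))

/-- The conditional probability, given that a standard Gaussian equals `x`, that a `ρ`-correlated
one is at least `y`. -/
def condTail (ρ x y : ℝ) : ℝ := gaussTail ((y - ρ * x) / √(1 - ρ ^ 2))

lemma integrable_pdf_mul_condTail (ρ y : ℝ) : Integrable fun x ↦ φ x * condTail ρ x y :=
  (integrable_gaussianPDFReal 0 1).mul_bdd (c := 1)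
    (continuous_gaussTail.comp (by fun_prop)).aestronglyMeasurable
    (.of_forall fun x ↦ by
      rw [norm_eq_abs, condTail, abs_of_pos (gaussTail_pos _)]
      exact (gaussTail_lt_one _).le)

lemma borellFn_gaussTail_eq_integral (hρ : ρ ^ 2 < 1) (a b : ℝ) :
    borellFn ρ (gaussTail a) (gaussTail b) = ∫ x in Ioi a, φ x * condTail ρ x b := by
  have hs : 0 < √(1 - ρ ^ 2) := sqrt_pos.2 (sub_pos.2 hρ)
  have hwedge : MeasurableSet {z : ℝ × ℝ | a ≤ z.1 ∧ b ≤ z.2} :=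
    measurableSet_Ici.prod measurableSet_Ici
  have hslice (x : ℝ) : (gaussianReal 0 1).real
        {u | a ≤ x ∧ b ≤ ρ * x + √(1 - ρ ^ 2) * u} = (Ici a).indicator (condTail ρ · b) x := by
    by_cases hx : a ≤ x
    · rw [indicator_of_mem (mem_Ici.2 hx), condTail, gaussTail, measureReal_def]
      congr 2
      ext u
      simp only [hx, true_and, mem_ofPred_eq, mem_Ici, div_le_iff₀' hs, sub_le_iff_le_add']
    · simp [hx]
  have hmeas : MeasurableSet
      ((fun z : ℝ × ℝ ↦ (z.1, ρ • z.1 + √(1 - ρ ^ 2) • z.2)) ⁻¹' {z | a ≤ z.1 ∧ b ≤ z.2}) :=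
    measurableSet_preimage (by fun_prop) hwedge
  rw [borellFn_gaussTail, correlatedGaussian, map_measureReal_apply (by fun_prop) hwedge,
    stdGaussian_real]
  calc (gaussianReal 0 1).prod (gaussianReal 0 1) |>.real _
    _ = ∫ x, (Ici a).indicator (condTail ρ · b) x ∂gaussianReal 0 1 := by
      rw [← integral_indicator_one hmeas, integral_prod _ (.indicator (integrable_const _) hmeas)]
      refine integral_congr_ae (.of_forall fun x ↦ ?_)
      rw [← hslice, ← integral_indicator_one]
      · rfl
      · exact measurable_prodMk_left hmeas
    _ = ∫ x in Ioi a, φ x * condTail ρ x b := by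
      rw [integral_gaussianReal_eq_integral_smul one_ne_zero, ← integral_Ici_eq_integral_Ioi,
        ← integral_indicator measurableSet_Ici]
      simp only [smul_eq_mul, indicator_mul_right]

lemma hasDerivAt_borellFn_gaussTail (hρ : ρ ^ 2 < 1) (a b : ℝ) :
    HasDerivAt (fun a ↦ borellFn ρ (gaussTail a) (gaussTail b)) (-(φ a * condTail ρ a b)) a := by
  simp only [borellFn_gaussTail_eq_integral hρ]
  exact hasDerivAt_integral_Ioi
    (continuous_stdGaussianPDF.mul (continuous_gaussTail.comp (by fun_prop)))
    (integrable_pdf_mul_condTail ρ b) a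

lemma hasDerivAt_borellFn_left (hρ : ρ ^ 2 < 1) {x y : ℝ} (hx : x ∈ Ioo 0 1) (hy : y ∈ Ioo 0 1) :
    HasDerivAt (borellFn ρ · y) (condTail ρ (tailQuantile x) (tailQuantile y)) x := by
  have h := (hasDerivAt_borellFn_gaussTail hρ (tailQuantile x) (tailQuantile y)).comp x
    (hasDerivAt_tailQuantile hx)
  refine (h.congr_of_eventuallyEq ?_).congr_deriv ?_
  · filter_upwards [isOpen_Ioo.mem_nhds hx] with t ht
    rw [Function.comp_apply, gaussTail_tailQuantile ht, gaussTail_tailQuantile hy]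
  · have := (stdGaussianPDF_pos (tailQuantile x)).ne'
    field_simp

lemma hasDerivAt_borellFn_right (hρ : ρ ^ 2 < 1) {x y : ℝ} (hx : x ∈ Ioo 0 1) (hy : y ∈ Ioo 0 1) :
    HasDerivAt (borellFn ρ x) (condTail ρ (tailQuantile y) (tailQuantile x)) y := by
  simpa only [borellFn_comm hρ.le] using hasDerivAt_borellFn_left hρ hy hx

lemma hasDerivAt_comp₂ {F : Type*} [NormedAddCommGroup F] [NormedSpace ℝ F] {f f₁ f₂ : ℝ → ℝ → F}
    {s : Set (ℝ × ℝ)} (hs : IsOpen s)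
    (hf₁ : ∀ p ∈ s, HasDerivAt (f · p.2) (f₁ p.1 p.2) p.1)
    (hf₂ : ∀ p ∈ s, HasDerivAt (f p.1) (f₂ p.1 p.2) p.2)
    (hc₁ : ContinuousOn (fun p ↦ f₁ p.1 p.2) s) (hc₂ : ContinuousOn (fun p ↦ f₂ p.1 p.2) s)
    {x y : ℝ → ℝ} {x' y' t : ℝ} (hx : HasDerivAt x x' t) (hy : HasDerivAt y y' t)
    (hmem : (x t, y t) ∈ s) :
    HasDerivAt (fun t ↦ f (x t) (y t)) (x' • f₁ (x t) (y t) + y' • f₂ (x t) (y t)) t := by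
  have hnhds := hs.mem_nhds hmem
  have hcont : Continuous (ContinuousLinearMap.toSpanSingleton ℝ : F → ℝ →L[ℝ] F) :=
    (ContinuousLinearMap.toSpanSingletonCLE (𝕜 := ℝ) (E := F)).continuous
  have h := hasStrictFDerivAt_uncurry_coprod (u := (x t, y t)) (f := f)
    (f₁ := fun a b ↦ .toSpanSingleton ℝ (f₁ a b)) (f₂ := fun a b ↦ .toSpanSingleton ℝ (f₂ a b))
    (by filter_upwards [hnhds] with p hp using hf₁ p hp)
    (by filter_upwards [hnhds] with p hp using hf₂ p hp)
    (hcont.continuousAt.comp (hc₁.continuousAt hnhds))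
    (hcont.continuousAt.comp (hc₂.continuousAt hnhds))
  refine (h.hasFDerivAt.comp_hasDerivAt t (hx.prodMk hy)).congr_deriv ?_
  rw [ContinuousLinearMap.coprod_apply]
  rfl

end BorellFn

/-! ### The correlated two-point inequality -/

lemma hasDerivAt_borellFn_comp {ρ : ℝ} (hρ : ρ ^ 2 < 1) {x y : ℝ → ℝ} {x' y' t : ℝ}
    (hx : HasDerivAt x x' t) (hy : HasDerivAt y y' t) (hxt : x t ∈ Ioo 0 1) (hyt : y t ∈ Ioo 0 1) :
    HasDerivAt (fun t ↦ borellFn ρ (x t) (y t))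
      (x' * condTail ρ (tailQuantile (x t)) (tailQuantile (y t))
        + y' * condTail ρ (tailQuantile (y t)) (tailQuantile (x t))) t := by
  have hfst : ContinuousOn (fun p : ℝ × ℝ ↦ tailQuantile p.1) (Ioo 0 1 ×ˢ Ioo 0 1) :=
    continuousOn_tailQuantile.comp continuousOn_fst fun _ hp ↦ hp.1
  have hsnd : ContinuousOn (fun p : ℝ × ℝ ↦ tailQuantile p.2) (Ioo 0 1 ×ˢ Ioo 0 1) :=
    continuousOn_tailQuantile.comp continuousOn_snd fun _ hp ↦ hp.2
  exact hasDerivAt_comp₂ (f := borellFn ρ)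
    (f₁ := fun a b ↦ condTail ρ (tailQuantile a) (tailQuantile b))
    (f₂ := fun a b ↦ condTail ρ (tailQuantile b) (tailQuantile a)) (isOpen_Ioo.prod isOpen_Ioo)
    (fun _ hp ↦ hasDerivAt_borellFn_left hρ hp.1 hp.2)
    (fun _ hp ↦ hasDerivAt_borellFn_right hρ hp.1 hp.2)
    (continuous_gaussTail.comp_continuousOn (by fun_prop))
    (continuous_gaussTail.comp_continuousOn (by fun_prop)) hx hy ⟨hxt, hyt⟩

/-- The joint density at `(a, b)` of a pair of `ρ`-correlated standard Gaussians. -/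
def correlatedPDF (ρ a b : ℝ) : ℝ := φ a * φ ((b - ρ * a) / √(1 - ρ ^ 2)) / √(1 - ρ ^ 2)

lemma correlatedPDF_comm {ρ : ℝ} (hρ : ρ ^ 2 < 1) (a b : ℝ) :
    correlatedPDF ρ a b = correlatedPDF ρ b a := by
  have hs : √(1 - ρ ^ 2) ^ 2 = 1 - ρ ^ 2 := sq_sqrt (sub_pos.2 hρ).le
  have hs0 : 1 - ρ ^ 2 ≠ 0 := (sub_pos.2 hρ).ne'
  have hexp (a b : ℝ) : φ a * φ ((b - ρ * a) / √(1 - ρ ^ 2))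
      = (√(2 * π))⁻¹ ^ 2 * exp (-(a ^ 2 + b ^ 2 - 2 * ρ * a * b) / (2 * (1 - ρ ^ 2))) := by
    rw [stdGaussianPDF_eq, stdGaussianPDF_eq, mul_mul_mul_comm, ← exp_add, ← sq, div_pow, hs]
    congr 2
    field_simp
    ring
  rw [correlatedPDF, correlatedPDF, hexp, hexp]
  ring_nf

/-- The second derivative of `borellFn ρ` at `p ∈ (0, 1)²` along the vector `v`. -/
def borellHessian (ρ : ℝ) (p v : ℝ × ℝ) : ℝ :=
  let u := v.1 / φ (tailQuantile p.1)
  let w := v.2 / φ (tailQuantile p.2)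
  correlatedPDF ρ (tailQuantile p.1) (tailQuantile p.2) * (2 * u * w - ρ * u ^ 2 - ρ * w ^ 2)

lemma hasDerivAt_condTail_comp {ρ : ℝ} {x y : ℝ → ℝ} {x' y' t : ℝ}
    (hx : HasDerivAt x x' t) (hy : HasDerivAt y y' t) :
    HasDerivAt (fun t ↦ condTail ρ (x t) (y t))
      (-(correlatedPDF ρ (x t) (y t) / φ (x t) * (y' - ρ * x'))) t := by
  refine ((hasDerivAt_gaussTail _).comp t ((hy.sub (hx.const_mul ρ)).div_const _)).congr_deriv ?_
  have := (stdGaussianPDF_pos (x t)).ne'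
  rw [correlatedPDF]
  simp only [Pi.sub_apply]
  field_simp

lemma hasDerivAt_borellFn_deriv {ρ : ℝ} (hρ : ρ ^ 2 < 1) {x y : ℝ → ℝ} {x' y' t : ℝ}
    (hx : HasDerivAt x x' t) (hy : HasDerivAt y y' t) (hxt : x t ∈ Ioo 0 1) (hyt : y t ∈ Ioo 0 1) :
    HasDerivAt (fun t ↦ x' * condTail ρ (tailQuantile (x t)) (tailQuantile (y t))
        + y' * condTail ρ (tailQuantile (y t)) (tailQuantile (x t)))
      (borellHessian ρ (x t, y t) (x', y')) t := by
  have hQx := (hasDerivAt_tailQuantile hxt).comp t hx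
  have hQy := (hasDerivAt_tailQuantile hyt).comp t hy
  refine (((hasDerivAt_condTail_comp hQx hQy).const_mul x').add
    ((hasDerivAt_condTail_comp hQy hQx).const_mul y')).congr_deriv ?_
  simp only [Function.comp_apply, borellHessian, correlatedPDF_comm hρ (tailQuantile (y t))]
  ring

lemma borellHessian_smul (ρ : ℝ) (p : ℝ × ℝ) (c : ℝ) (v : ℝ × ℝ) :
    borellHessian ρ p (c • v) = c ^ 2 * borellHessian ρ p v := by
  simp only [borellHessian, Prod.smul_fst, Prod.smul_snd, smul_eq_mul]
  ring

/-- Averaging the Hessian over `ρ`-correlated signs leaves minus a square: this is where the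
correlation of the increments has to match the parameter of the functional. -/
lemma borellHessian_correlated_signs_nonpos {ρ : ℝ} (hρ : 0 ≤ ρ) (p : ℝ × ℝ) (α β : ℝ) :
    (1 + ρ) / 2 * borellHessian ρ p (α, β) + (1 - ρ) / 2 * borellHessian ρ p (α, -β) ≤ 0 := by
  have hpdf : 0 ≤ correlatedPDF ρ (tailQuantile p.1) (tailQuantile p.2) :=
    div_nonneg (mul_nonneg (stdGaussianPDF_pos _).le (stdGaussianPDF_pos _).le) (sqrt_nonneg _)
  calc
    _ = -(ρ * correlatedPDF ρ (tailQuantile p.1) (tailQuantile p.2)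
        * (α / φ (tailQuantile p.1) - β / φ (tailQuantile p.2)) ^ 2) := by
      simp only [borellHessian]
      ring
    _ ≤ 0 := neg_nonpos.2 (by positivity)

lemma continuousOn_borellHessian (ρ : ℝ) :
    ContinuousOn (fun q : (ℝ × ℝ) × (ℝ × ℝ) ↦ borellHessian ρ q.1 q.2)
      ((Ioo 0 1 ×ˢ Ioo 0 1) ×ˢ univ) := by
  have hfst : ContinuousOn (fun q : (ℝ × ℝ) × (ℝ × ℝ) ↦ tailQuantile q.1.1)
      ((Ioo 0 1 ×ˢ Ioo 0 1) ×ˢ univ) :=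
    continuousOn_tailQuantile.comp (by fun_prop) fun _ hq ↦ hq.1.1
  have hsnd : ContinuousOn (fun q : (ℝ × ℝ) × (ℝ × ℝ) ↦ tailQuantile q.1.2)
      ((Ioo 0 1 ×ˢ Ioo 0 1) ×ˢ univ) :=
    continuousOn_tailQuantile.comp (by fun_prop) fun _ hq ↦ hq.1.2
  have hφ₁ := continuous_stdGaussianPDF.comp_continuousOn hfst
  have hφ₂ := continuous_stdGaussianPDF.comp_continuousOn hsnd
  have hu : ContinuousOn (fun q : (ℝ × ℝ) × (ℝ × ℝ) ↦ q.2.1 / φ (tailQuantile q.1.1))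
      ((Ioo 0 1 ×ˢ Ioo 0 1) ×ˢ univ) :=
    .div (by fun_prop) hφ₁ fun _ _ ↦ (stdGaussianPDF_pos _).ne'
  have hw : ContinuousOn (fun q : (ℝ × ℝ) × (ℝ × ℝ) ↦ q.2.2 / φ (tailQuantile q.1.2))
      ((Ioo 0 1 ×ˢ Ioo 0 1) ×ˢ univ) :=
    .div (by fun_prop) hφ₂ fun _ _ ↦ (stdGaussianPDF_pos _).ne'
  have hpdf := (hφ₁.mul (continuous_stdGaussianPDF.comp_continuousOn
    ((hsnd.sub (hfst.const_mul ρ)).div_const √(1 - ρ ^ 2)))).div_const √(1 - ρ ^ 2)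
  exact hpdf.mul ((((hu.const_mul 2).mul hw).sub ((hu.pow 2).const_mul ρ)).sub
    ((hw.pow 2).const_mul ρ))

lemma exists_abs_borellHessian_sub_le (ρ : ℝ) {K : Set (ℝ × ℝ)} (hK : IsCompact K)
    (hK01 : K ⊆ Ioo 0 1 ×ˢ Ioo 0 1) {η : ℝ} (hη : 0 < η) :
    ∃ r > 0, ∀ p ∈ K, ∀ q ∈ K, dist p q ≤ r → ∀ v : ℝ × ℝ,
      |borellHessian ρ p v - borellHessian ρ q v| ≤ η * ‖v‖ ^ 2 := by
  have hunif := (hK.prod (isCompact_closedBall (0 : ℝ × ℝ) 1)).uniformContinuousOn_of_continuous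
    ((continuousOn_borellHessian ρ).mono (prod_mono hK01 (subset_univ _)))
  obtain ⟨r, hr, h⟩ := Metric.uniformContinuousOn_iff_le.1 hunif η hη
  refine ⟨r, hr, fun p hp q hq hpq v ↦ ?_⟩
  have hunit : ‖‖v‖⁻¹ • v‖ ≤ 1 := by
    rw [norm_smul, norm_inv, norm_norm]
    exact inv_mul_le_one
  have hv : ‖v‖ • ‖v‖⁻¹ • v = v := by
    rcases eq_or_ne v 0 with rfl | hv
    · simp
    · rw [smul_inv_smul₀ (norm_ne_zero_iff.2 hv)]
  have hscale (p : ℝ × ℝ) : borellHessian ρ p v = ‖v‖ ^ 2 * borellHessian ρ p (‖v‖⁻¹ • v) := by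
    rw [← borellHessian_smul, hv]
  have hdist := h (p, ‖v‖⁻¹ • v) ⟨hp, mem_closedBall_zero_iff.2 hunit⟩ (q, ‖v‖⁻¹ • v)
    ⟨hq, mem_closedBall_zero_iff.2 hunit⟩
    (by rw [Prod.dist_eq, dist_self]; exact max_le hpq hr.le)
  rw [hscale, hscale, ← mul_sub, abs_mul, abs_sq, mul_comm]
  exact mul_le_mul_of_nonneg_right hdist (sq_nonneg _)

lemma add_sub_two_mul_le_of_second_deriv_le {g g' g'' : ℝ → ℝ} {M : ℝ}
    (hg : ∀ t ∈ Icc (-1) 1, HasDerivAt g (g' t) t) (hg' : ∀ t ∈ Icc (-1) 1, HasDerivAt g' (g'' t) t)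
    (hM : ∀ t ∈ Icc (-1) 1, g'' t ≤ M) : g 1 + g (-1) - 2 * g 0 ≤ M := by
  have hsq (t : ℝ) : HasDerivAt (fun t ↦ M / 2 * t ^ 2) (M * t) t :=
    (((hasDerivAt_id t).pow 2).const_mul (M / 2)).congr_deriv (by simp; ring)
  have hlin (t : ℝ) : HasDerivAt (fun t ↦ M * t) M t := by
    simpa using (hasDerivAt_id t).const_mul M
  have hconc : ConcaveOn ℝ (Icc (-1) 1) (fun t ↦ g t - M / 2 * t ^ 2) :=
    concaveOn_of_hasDerivWithinAt2_nonpos (convex_Icc _ _)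
      (fun t ht ↦ ((hg t ht).sub (hsq t)).continuousAt.continuousWithinAt)
      (fun t ht ↦ ((hg t (interior_subset ht)).sub (hsq t)).hasDerivWithinAt)
      (fun t ht ↦ ((hg' t (interior_subset ht)).sub (hlin t)).hasDerivWithinAt)
      (fun t ht ↦ sub_nonpos.2 (hM t (interior_subset ht)))
  have h := hconc.2 (show (1 : ℝ) ∈ Icc (-1) 1 by simp) (show (-1 : ℝ) ∈ Icc (-1) 1 by simp)
    (by norm_num : (0 : ℝ) ≤ 1 / 2) (by norm_num : (0 : ℝ) ≤ 1 / 2) (by norm_num)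
  norm_num at h
  linarith

lemma borellFn_second_difference_le {ρ : ℝ} (hρ : ρ ^ 2 < 1) {m n α β M : ℝ}
    (hx : ∀ t ∈ Icc (-1 : ℝ) 1, m + t * α ∈ Ioo 0 1)
    (hy : ∀ t ∈ Icc (-1 : ℝ) 1, n + t * β ∈ Ioo 0 1)
    (hM : ∀ t ∈ Icc (-1 : ℝ) 1, borellHessian ρ (m + t * α, n + t * β) (α, β) ≤ M) :
    borellFn ρ (m + α) (n + β) + borellFn ρ (m - α) (n - β) - 2 * borellFn ρ m n ≤ M := by
  have hline (m α t : ℝ) : HasDerivAt (fun t ↦ m + t * α) α t := by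
    simpa using ((hasDerivAt_id t).mul_const α).const_add m
  simpa [← sub_eq_add_neg] using add_sub_two_mul_le_of_second_deriv_le
    (fun t ht ↦ hasDerivAt_borellFn_comp hρ (hline m α t) (hline n β t) (hx t ht) (hy t ht))
    (fun t ht ↦ hasDerivAt_borellFn_deriv hρ (hline m α t) (hline n β t) (hx t ht) (hy t ht)) hM

lemma dist_add_smul_le {m α t κ : ℝ} (ht : t ∈ Icc (-1 : ℝ) 1) (hα : |α| ≤ κ) :
    dist (m + t * α) m ≤ κ := by
  rw [Real.dist_eq, add_sub_cancel_left, abs_mul]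
  exact (mul_le_of_le_one_left (abs_nonneg _) (abs_le.2 ht)).trans hα

lemma exists_correlated_two_point_le {ρ : ℝ} (hρ0 : 0 ≤ ρ) (hρ1 : ρ < 1) {δ η : ℝ} (hδ : 0 < δ)
    (hη : 0 < η) :
    ∃ r > 0, ∀ m n α β κ : ℝ, |α| ≤ κ → |β| ≤ κ → κ ≤ r →
      m + α ∈ Icc δ (1 - δ) → m - α ∈ Icc δ (1 - δ) → n + β ∈ Icc δ (1 - δ) →
      n - β ∈ Icc δ (1 - δ) →
      (1 + ρ) / 4 * (borellFn ρ (m + α) (n + β) + borellFn ρ (m - α) (n - β))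
        + (1 - ρ) / 4 * (borellFn ρ (m + α) (n - β) + borellFn ρ (m - α) (n + β))
        ≤ borellFn ρ m n + η * κ ^ 2 := by
  have hρ : ρ ^ 2 < 1 := by nlinarith
  have hsub : Icc δ (1 - δ) ⊆ Ioo 0 1 := fun x hx ↦ ⟨hδ.trans_le hx.1, by linarith [hx.2]⟩
  obtain ⟨r, hr, hHess⟩ := exists_abs_borellHessian_sub_le ρ (isCompact_Icc.prod isCompact_Icc)
    (prod_mono hsub hsub) hη
  refine ⟨r, hr, fun m n α β κ hα hβ hκ hx₁ hx₂ hy₁ hy₂ ↦ ?_⟩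
  have hseg {m α : ℝ} (h₁ : m + α ∈ Icc δ (1 - δ)) (h₂ : m - α ∈ Icc δ (1 - δ)) {t : ℝ}
      (ht : t ∈ Icc (-1 : ℝ) 1) : m + t * α ∈ Icc δ (1 - δ) := by
    convert convex_Icc δ (1 - δ) h₁ h₂ (by linarith [ht.1] : 0 ≤ (1 + t) / 2)
      (by linarith [ht.2] : 0 ≤ (1 - t) / 2) (by ring) using 1
    simp only [smul_eq_mul]
    ring
  have hmid {m α : ℝ} (h₁ : m + α ∈ Icc δ (1 - δ)) (h₂ : m - α ∈ Icc δ (1 - δ)) :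
      m ∈ Icc δ (1 - δ) := by
    simpa using hseg h₁ h₂ (t := 0) (by simp)
  have hdiff {β : ℝ} (hβ : |β| ≤ κ) (hy₁ : n + β ∈ Icc δ (1 - δ))
      (hy₂ : n - β ∈ Icc δ (1 - δ)) :
      borellFn ρ (m + α) (n + β) + borellFn ρ (m - α) (n - β) - 2 * borellFn ρ m n
        ≤ borellHessian ρ (m, n) (α, β) + η * κ ^ 2 := by
    refine borellFn_second_difference_le hρ (fun t ht ↦ hsub (hseg hx₁ hx₂ ht))
      (fun t ht ↦ hsub (hseg hy₁ hy₂ ht)) fun t ht ↦ ?_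
    have hnear := hHess (m + t * α, n + t * β) ⟨hseg hx₁ hx₂ ht, hseg hy₁ hy₂ ht⟩ (m, n)
      ⟨hmid hx₁ hx₂, hmid hy₁ hy₂⟩
      (max_le ((dist_add_smul_le ht hα).trans hκ) ((dist_add_smul_le ht hβ).trans hκ)) (α, β)
    have hv : ‖(α, β)‖ ^ 2 ≤ κ ^ 2 := pow_le_pow_left₀ (norm_nonneg _) (max_le hα hβ) 2
    linarith [le_of_abs_le hnear, mul_le_mul_of_nonneg_left hv hη.le]
  have hplus := hdiff hβ hy₁ hy₂
  have hminus := hdiff (β := -β) (by rwa [abs_neg]) (by rwa [← sub_eq_add_neg])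
    (by rwa [sub_neg_eq_add])
  rw [← sub_eq_add_neg, sub_neg_eq_add] at hminus
  have hsigns := borellHessian_correlated_signs_nonpos hρ0 (m, n) α β
  nlinarith [mul_le_mul_of_nonneg_left hplus (by linarith : 0 ≤ (1 + ρ) / 4),
    mul_le_mul_of_nonneg_left hminus (by linarith : 0 ≤ (1 - ρ) / 4),
    mul_nonneg hη.le (sq_nonneg κ)]

/-! ### Random walks with correlated signs -/

section Walk

section CoordinateSteps

variable (E : Type*) [NormedAddCommGroup E] [InnerProductSpace ℝ E] [FiniteDimensional ℝ E]

/-- `n` rounds of steps of length `1 / √n`, one for each vector of an orthonormal basis. -/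
def coordinateSteps (n : ℕ) : List E :=
  (List.replicate n (List.ofFn fun i ↦ (√n)⁻¹ • stdOrthonormalBasis ℝ E i)).flatten

variable {E}

lemma norm_of_mem_coordinateSteps {n : ℕ} {v : E} (hv : v ∈ coordinateSteps E n) :
    ‖v‖ = (√n)⁻¹ := by
  simp only [coordinateSteps, List.mem_flatten, List.mem_replicate] at hv
  obtain ⟨_, ⟨-, rfl⟩, hv⟩ := hv
  obtain ⟨i, rfl⟩ := List.mem_ofFn.1 hv
  rw [norm_smul, (stdOrthonormalBasis ℝ E).norm_eq_one, mul_one, norm_of_nonneg (by positivity)]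

lemma length_coordinateSteps (n : ℕ) :
    (coordinateSteps E n).length = n * Module.finrank ℝ E := by
  simp [coordinateSteps]

end CoordinateSteps

lemma borellFn_mem_Icc (ρ x y : ℝ) : borellFn ρ x y ∈ Icc 0 1 :=
  ⟨measureReal_nonneg, measureReal_le_one⟩

lemma integrable_borellFn_comp {Ω : Type*} [MeasurableSpace Ω] {μ : Measure Ω} [IsFiniteMeasure μ]
    {ρ : ℝ} (hρ : ρ ^ 2 ≤ 1) {X Y : Ω → ℝ} (hX : AEMeasurable X μ) (hY : AEMeasurable Y μ) :
    Integrable (fun ω ↦ borellFn ρ (X ω) (Y ω)) μ :=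
  .of_mem_Icc 0 1 ((continuous_borellFn hρ).measurable.comp_aemeasurable (hX.prodMk hY))
    (.of_forall fun _ ↦ borellFn_mem_Icc _ _ _)

lemma integral_mem_Icc {Ω : Type*} [MeasurableSpace Ω] {μ : Measure Ω} [IsProbabilityMeasure μ]
    {f : Ω → ℝ} {a b : ℝ} (hf : AEMeasurable f μ) (hab : ∀ ω, f ω ∈ Icc a b) :
    ∫ ω, f ω ∂μ ∈ Icc a b :=
  (convex_Icc a b).integral_mem isClosed_Icc (.of_forall hab)
    (.of_mem_Icc a b hf (.of_forall hab))

variable {E : Type*} [NormedAddCommGroup E]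

lemma lipschitzWith_comp_const_add {f : E → ℝ} {L : ℝ≥0} (hf : LipschitzWith L f) (y : E) :
    LipschitzWith L fun x ↦ f (y + x) := fun x x' ↦ by
  simpa only [edist_add_left] using hf (y + x) (y + x')

variable [MeasurableSpace E]

/-- `borellFn ρ` increases by at most `e` when it is applied to the means of Lipschitz functions
of a random pair with law `μ` and values in `[δ, 1 - δ]`. -/
def HasBorellDefectLE (ρ : ℝ) (L : ℝ≥0) (δ : ℝ) (μ : Measure (WithLp 2 (E × E))) (e : ℝ) : Prop :=
  ∀ f g : E → ℝ, LipschitzWith L f → LipschitzWith L g →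
    (∀ x, f x ∈ Icc δ (1 - δ)) → (∀ x, g x ∈ Icc δ (1 - δ)) →
    ∫ z, borellFn ρ (f z.fst) (g z.snd) ∂μ
      ≤ borellFn ρ (∫ z, f z.fst ∂μ) (∫ z, g z.snd ∂μ) + e

/-- The law of `(σ v, σ' v)` for uniform signs `σ`, `σ'` with correlation `ρ`. -/
def signMeasure (ρ : ℝ) (v : E) : Measure (WithLp 2 (E × E)) :=
  ENNReal.ofReal ((1 + ρ) / 4) • (.dirac (.toLp 2 (v, v)) + .dirac (.toLp 2 (-v, -v)))
    + ENNReal.ofReal ((1 - ρ) / 4) • (.dirac (.toLp 2 (v, -v)) + .dirac (.toLp 2 (-v, v)))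

lemma isProbabilityMeasure_signMeasure {ρ : ℝ} (hρ : ρ ∈ Icc (-1) 1) (v : E) :
    IsProbabilityMeasure (signMeasure ρ v) := by
  constructor
  simp only [signMeasure, Measure.add_apply, Measure.smul_apply, measure_univ, smul_eq_mul]
  rw [← add_mul, ← ENNReal.ofReal_add (by linarith [hρ.1]) (by linarith [hρ.2]),
    one_add_one_eq_two, ← ENNReal.ofReal_ofNat, ← ENNReal.ofReal_mul (by linarith),
    ENNReal.ofReal_eq_one]
  ring

/-- The law of the sum of independent steps with laws `signMeasure ρ v`, for `v` in the list. -/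
def walkMeasure (ρ : ℝ) : List E → Measure (WithLp 2 (E × E))
  | [] => .dirac 0
  | v :: l => signMeasure ρ v ∗ walkMeasure ρ l

variable [BorelSpace E]

lemma lipschitzWith_integral_comp_add {Ω : Type*} [MeasurableSpace Ω] {μ : Measure Ω}
    [IsProbabilityMeasure μ] {X : Ω → E} (hX : Measurable X) {f : E → ℝ} {L : ℝ≥0}
    (hf : LipschitzWith L f) {a b : ℝ} (hab : ∀ x, f x ∈ Icc a b) :
    LipschitzWith L fun x ↦ ∫ ω, f (x + X ω) ∂μ := by
  have hInt (x : E) : Integrable (fun ω ↦ f (x + X ω)) μ :=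
    .of_mem_Icc a b (hf.continuous.measurable.comp (hX.const_add x)).aemeasurable
      (.of_forall fun _ ↦ hab _)
  refine .of_dist_le_mul fun x y ↦ ?_
  rw [dist_eq_norm, ← integral_sub (hInt x) (hInt y)]
  refine (norm_integral_le_of_norm_le_const (.of_forall fun ω ↦ ?_)).trans_eq
    (by rw [probReal_univ, mul_one])
  simpa [dist_eq_norm] using hf.dist_le_mul (x + X ω) (y + X ω)

variable [InnerProductSpace ℝ E] [FiniteDimensional ℝ E]

lemma hasBorellDefectLE_dirac (ρ : ℝ) (L : ℝ≥0) (δ : ℝ) (z : WithLp 2 (E × E)) :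
    HasBorellDefectLE ρ L δ (.dirac z) 0 := by
  intro f g _ _ _ _
  simp only [integral_dirac, add_zero, le_refl]

lemma HasBorellDefectLE.conv {ρ : ℝ} (hρ : ρ ^ 2 ≤ 1) {L : ℝ≥0} {δ e e' : ℝ}
    {μ ν : Measure (WithLp 2 (E × E))} [IsProbabilityMeasure μ] [IsProbabilityMeasure ν]
    (hμ : HasBorellDefectLE ρ L δ μ e) (hν : HasBorellDefectLE ρ L δ ν e') :
    HasBorellDefectLE ρ L δ (μ ∗ ν) (e + e') := by
  intro f g hf hg hf01 hg01
  have hfm := hf.continuous.measurable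
  have hgm := hg.continuous.measurable
  set F : E → ℝ := fun x ↦ ∫ w, f (x + w.fst) ∂ν
  set G : E → ℝ := fun x ↦ ∫ w, g (x + w.snd) ∂ν
  have hF : LipschitzWith L F := lipschitzWith_integral_comp_add (by fun_prop) hf hf01
  have hG : LipschitzWith L G := lipschitzWith_integral_comp_add (by fun_prop) hg hg01
  have hF01 (x : E) : F x ∈ Icc δ (1 - δ) := integral_mem_Icc (by fun_prop) fun _ ↦ hf01 _
  have hG01 (x : E) : G x ∈ Icc δ (1 - δ) := integral_mem_Icc (by fun_prop) fun _ ↦ hg01 _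
  have hFint : ∫ z, f z.fst ∂(μ ∗ ν) = ∫ z, F z.fst ∂μ :=
    integral_conv (.of_mem_Icc δ (1 - δ) (by fun_prop) (.of_forall fun _ ↦ hf01 _))
  have hGint : ∫ z, g z.snd ∂(μ ∗ ν) = ∫ z, G z.snd ∂μ :=
    integral_conv (.of_mem_Icc δ (1 - δ) (by fun_prop) (.of_forall fun _ ↦ hg01 _))
  have hInt : Integrable (fun z ↦ borellFn ρ (F z.fst) (G z.snd)) μ :=
    integrable_borellFn_comp hρ (hF.continuous.measurable.comp (by fun_prop)).aemeasurable
      (hG.continuous.measurable.comp (by fun_prop)).aemeasurable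
  calc ∫ z, borellFn ρ (f z.fst) (g z.snd) ∂(μ ∗ ν)
    _ = ∫ z, ∫ w, borellFn ρ (f (z.fst + w.fst)) (g (z.snd + w.snd)) ∂ν ∂μ :=
      integral_conv (integrable_borellFn_comp hρ (by fun_prop) (by fun_prop))
    _ ≤ ∫ z, (borellFn ρ (F z.fst) (G z.snd) + e') ∂μ :=
      integral_mono_of_nonneg
        (.of_forall fun _ ↦ integral_nonneg fun _ ↦ (borellFn_mem_Icc _ _ _).1)
        (hInt.add (integrable_const e')) (.of_forall fun z ↦ hν (fun x ↦ f (z.fst + x))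
          (fun x ↦ g (z.snd + x)) (lipschitzWith_comp_const_add hf _)
          (lipschitzWith_comp_const_add hg _)
          (fun _ ↦ hf01 _) fun _ ↦ hg01 _)
    _ = ∫ z, borellFn ρ (F z.fst) (G z.snd) ∂μ + e' := by
      rw [integral_add hInt (integrable_const e'), integral_const, probReal_univ, one_smul]
    _ ≤ borellFn ρ (∫ z, f z.fst ∂(μ ∗ ν)) (∫ z, g z.snd ∂(μ ∗ ν)) + (e + e') := by
      rw [hFint, hGint, ← add_assoc]
      gcongr
      exact hμ F G hF hG hF01 hG01

lemma integral_signMeasure {F : Type*} [NormedAddCommGroup F] [NormedSpace ℝ F] [CompleteSpace F]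
    {ρ : ℝ} (hρ : ρ ∈ Icc (-1) 1) (v : E) (f : WithLp 2 (E × E) → F) :
    ∫ z, f z ∂signMeasure ρ v
      = ((1 + ρ) / 4) • (f (.toLp 2 (v, v)) + f (.toLp 2 (-v, -v)))
        + ((1 - ρ) / 4) • (f (.toLp 2 (v, -v)) + f (.toLp 2 (-v, v))) := by
  have hdirac (z : WithLp 2 (E × E)) : Integrable f (.dirac z) :=
    integrable_dirac enorm_lt_top
  rw [signMeasure, integral_add_measure, integral_smul_measure, integral_smul_measure,
    integral_add_measure (hdirac _) (hdirac _), integral_add_measure (hdirac _) (hdirac _)]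
  · simp only [integral_dirac]
    rw [ENNReal.toReal_ofReal (by linarith [hρ.1]), ENNReal.toReal_ofReal (by linarith [hρ.2])]
  · exact ((hdirac _).add_measure (hdirac _)).smul_measure ENNReal.ofReal_ne_top
  · exact ((hdirac _).add_measure (hdirac _)).smul_measure ENNReal.ofReal_ne_top

lemma exists_hasBorellDefectLE_signMeasure {ρ : ℝ} (hρ0 : 0 ≤ ρ) (hρ1 : ρ < 1) (L : ℝ≥0)
    {δ η : ℝ} (hδ : 0 < δ) (hη : 0 < η) :
    ∃ r > 0, ∀ v : E, L * ‖v‖ ≤ r →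
      HasBorellDefectLE ρ L δ (signMeasure ρ v) (η * (L * ‖v‖) ^ 2) := by
  obtain ⟨r, hr, htwo⟩ := exists_correlated_two_point_le hρ0 hρ1 hδ hη
  refine ⟨r, hr, fun v hv f g hf hg hf01 hg01 ↦ ?_⟩
  have hhalf {h : E → ℝ} (hh : LipschitzWith L h) : |(h v - h (-v)) / 2| ≤ L * ‖v‖ := by
    have hdist := hh.dist_le_mul v (-v)
    rw [Real.dist_eq, dist_eq_norm, sub_neg_eq_add, ← two_smul ℝ, norm_smul, norm_ofNat] at hdist
    rw [abs_div, abs_two]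
    linarith
  have hadd (a b : ℝ) : (a + b) / 2 + (a - b) / 2 = a := by ring
  have hsub (a b : ℝ) : (a + b) / 2 - (a - b) / 2 = b := by ring
  have hmean (a b : ℝ) : (1 + ρ) / 4 * (a + b) + (1 - ρ) / 4 * (a + b) = (a + b) / 2 := by ring
  have h := htwo ((f v + f (-v)) / 2) ((g v + g (-v)) / 2) ((f v - f (-v)) / 2)
    ((g v - g (-v)) / 2) (L * ‖v‖) (hhalf hf) (hhalf hg) hv
  simp only [hadd, hsub] at h
  simp only [integral_signMeasure ⟨by linarith, hρ1.le⟩, smul_eq_mul, WithLp.toLp_fst,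
    WithLp.toLp_snd, add_comm (g (-v)), hmean]
  exact h (hf01 v) (hf01 (-v)) (hg01 v) (hg01 (-v))

lemma isProbabilityMeasure_walkMeasure {ρ : ℝ} (hρ : ρ ∈ Icc (-1) 1) (l : List E) :
    IsProbabilityMeasure (walkMeasure ρ l) := by
  induction l with
  | nil => exact Measure.dirac.isProbabilityMeasure
  | cons v l ih =>
    have := isProbabilityMeasure_signMeasure hρ v
    rw [walkMeasure]
    infer_instance

lemma charFun_signMeasure {ρ : ℝ} (hρ : ρ ∈ Icc (-1) 1) (v t u : E) :
    charFun (signMeasure ρ v) (.toLp 2 (t, u))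
      = ((1 + ρ) / 2 * cos (⟪v, t⟫ + ⟪v, u⟫) + (1 - ρ) / 2 * cos (⟪v, t⟫ - ⟪v, u⟫) : ℝ) := by
  rw [charFun_apply, integral_signMeasure hρ]
  simp only [WithLp.prod_inner_apply, inner_neg_left, Complex.real_smul]
  push_cast
  simp only [Complex.cos]
  ring_nf

lemma charFun_walkMeasure {ρ : ℝ} (hρ : ρ ∈ Icc (-1) 1) (l : List E) (w : WithLp 2 (E × E)) :
    charFun (walkMeasure ρ l) w = (l.map fun v ↦ charFun (signMeasure ρ v) w).prod := by
  induction l with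
  | nil => simp [walkMeasure, charFun_dirac]
  | cons v l ih =>
    have := isProbabilityMeasure_signMeasure hρ v
    have := isProbabilityMeasure_walkMeasure hρ l
    rw [walkMeasure, charFun_conv, ih, List.map_cons, List.prod_cons]

lemma hasBorellDefectLE_walkMeasure {ρ : ℝ} (hρ : ρ ∈ Icc (-1) 1) {L : ℝ≥0} {δ : ℝ} {e : E → ℝ}
    {l : List E} (hl : ∀ v ∈ l, HasBorellDefectLE ρ L δ (signMeasure ρ v) (e v)) :
    HasBorellDefectLE ρ L δ (walkMeasure ρ l) (l.map e).sum := by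
  induction l with
  | nil => exact hasBorellDefectLE_dirac ρ L δ 0
  | cons v l ih =>
    have := isProbabilityMeasure_signMeasure hρ v
    have := isProbabilityMeasure_walkMeasure hρ l
    rw [List.map_cons, List.sum_cons]
    exact (hl v List.mem_cons_self).conv ((sq_le_one_iff_abs_le_one ρ).2 (abs_le.2 hρ))
      (ih fun w hw ↦ hl w (List.mem_cons_of_mem v hw))

lemma tendsto_nat_mul_cos_div_sqrt_sub_one (a : ℝ) :
    Tendsto (fun n : ℕ ↦ n * (cos (a / √n) - 1)) atTop (𝓝 (-(a ^ 2 / 2))) := by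
  have hsinc : Tendsto (fun n : ℕ ↦ sinc (a / √n / 2)) atTop (𝓝 1) := by
    rw [← sinc_zero]
    refine (continuous_sinc.tendsto 0).comp ?_
    have h := (tendsto_const_nhds (x := a)).div_atTop
      (tendsto_sqrt_atTop.comp tendsto_natCast_atTop_atTop)
    simpa using h.div_const 2
  have h : Tendsto (fun n : ℕ ↦ -(a ^ 2 / 2) * sinc (a / √n / 2) ^ 2) atTop (𝓝 (-(a ^ 2 / 2))) := by
    simpa using (hsinc.pow 2).const_mul (-(a ^ 2 / 2))
  refine h.congr' ?_
  filter_upwards [eventually_gt_atTop 0] with n hn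
  have hn' : (0 : ℝ) < n := Nat.cast_pos.2 hn
  have hsin : sin (a / √n / 2) = a / √n / 2 * sinc (a / √n / 2) := by
    rcases eq_or_ne (a / √n / 2) 0 with h0 | h0
    · simp [h0]
    · rw [sinc_of_ne_zero h0, mul_div_cancel₀ _ h0]
  have hcos : cos (a / √n) - 1 = -2 * sin (a / √n / 2) ^ 2 := by
    rw [sin_sq_eq_half_sub]
    ring_nf
  rw [hcos, hsin, mul_pow, div_pow, div_pow, sq_sqrt hn'.le]
  field_simp

lemma charFun_walkMeasure_coordinateSteps {ρ : ℝ} (hρ : ρ ∈ Icc (-1) 1) (n : ℕ) (t u : E) :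
    charFun (walkMeasure ρ (coordinateSteps E n)) (WithLp.toLp 2 (t, u))
      = ((∏ i, (1 + ((1 + ρ) / 2
          * (cos ((⟪stdOrthonormalBasis ℝ E i, t⟫ + ⟪stdOrthonormalBasis ℝ E i, u⟫) / √n) - 1)
        + (1 - ρ) / 2
          * (cos ((⟪stdOrthonormalBasis ℝ E i, t⟫ - ⟪stdOrthonormalBasis ℝ E i, u⟫) / √n) - 1)))
          ^ n : ℝ) : ℂ) := by
  simp only [charFun_walkMeasure hρ, charFun_signMeasure hρ, coordinateSteps, List.map_flatten,
    List.map_replicate, List.prod_flatten, List.prod_replicate, List.map_ofFn, List.prod_ofFn,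
    Function.comp_apply, inner_smul_left, conj_trivial, ← mul_add, ← mul_sub,
    Complex.ofReal_prod, Complex.ofReal_pow, Finset.prod_pow]
  refine congrArg (· ^ n) (Finset.prod_congr rfl fun i _ ↦ congrArg _ ?_)
  simp only [div_eq_inv_mul]
  ring

lemma tendsto_one_add_correlated_cos_pow (ρ a b : ℝ) :
    Tendsto (fun n : ℕ ↦ (1 + ((1 + ρ) / 2 * (cos ((a + b) / √n) - 1)
      + (1 - ρ) / 2 * (cos ((a - b) / √n) - 1))) ^ n) atTop
      (𝓝 (exp (-(a ^ 2 + 2 * ρ * (a * b) + b ^ 2) / 2))) := by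
  refine tendsto_one_add_pow_exp_of_tendsto ?_
  have h := ((tendsto_nat_mul_cos_div_sqrt_sub_one (a + b)).const_mul ((1 + ρ) / 2)).add
    ((tendsto_nat_mul_cos_div_sqrt_sub_one (a - b)).const_mul ((1 - ρ) / 2))
  refine (h.congr fun n ↦ by ring).trans_eq ?_
  ring_nf

lemma tendsto_charFun_walkMeasure {ρ : ℝ} (hρ : ρ ∈ Icc (-1) 1) (w : WithLp 2 (E × E)) :
    Tendsto (fun n ↦ charFun (walkMeasure ρ (coordinateSteps E n)) w) atTop
      (𝓝 (charFun ((correlatedGaussian E ρ).map (WithLp.toLp 2)) w)) := by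
  obtain ⟨⟨t, u⟩, rfl⟩ := WithLp.toLp_surjective 2 w
  set b := stdOrthonormalBasis ℝ E
  have hsum : -(‖t‖ ^ 2 + 2 * ρ * ⟪t, u⟫ + ‖u‖ ^ 2) / 2
      = ∑ i, -(⟪b i, t⟫ ^ 2 + 2 * ρ * (⟪b i, t⟫ * ⟪b i, u⟫) + ⟪b i, u⟫ ^ 2) / 2 := by
    rw [← Finset.sum_div, Finset.sum_neg_distrib, Finset.sum_add_distrib, Finset.sum_add_distrib,
      ← Finset.mul_sum, ← b.sum_inner_mul_inner t u, ← b.sum_sq_inner_right t,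
      ← b.sum_sq_inner_right u]
    simp only [real_inner_comm t]
  have hlimit : charFun ((correlatedGaussian E ρ).map (WithLp.toLp 2)) (WithLp.toLp 2 (t, u))
      = ((∏ i, exp (-(⟪b i, t⟫ ^ 2 + 2 * ρ * (⟪b i, t⟫ * ⟪b i, u⟫) + ⟪b i, u⟫ ^ 2) / 2) : ℝ) :
        ℂ) := by
    rw [charFun_correlatedGaussian ((sq_le_one_iff_abs_le_one ρ).2 (abs_le.2 hρ)), ← exp_sum,
      ← hsum]
    push_cast
    rfl
  rw [hlimit]
  simp only [charFun_walkMeasure_coordinateSteps hρ]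
  exact (Complex.continuous_ofReal.tendsto _).comp
    (tendsto_finsetProd _ fun i _ ↦ tendsto_one_add_correlated_cos_pow ρ _ _)

lemma tendsto_integral_walkMeasure {ρ : ℝ} (hρ : ρ ∈ Icc (-1) 1) {F : E × E → ℝ} {C : ℝ}
    (hF : Continuous F) (hC : ∀ z, ‖F z‖ ≤ C) :
    Tendsto (fun n ↦ ∫ z, F (z.fst, z.snd) ∂walkMeasure ρ (coordinateSteps E n)) atTop
      (𝓝 (∫ z, F z ∂correlatedGaussian E ρ)) := by
  have hmeas : Measurable (WithLp.toLp 2 : E × E → WithLp 2 (E × E)) := by fun_prop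
  have hwalk (n : ℕ) := isProbabilityMeasure_walkMeasure hρ (coordinateSteps E n)
  have := Measure.isProbabilityMeasure_map (μ := correlatedGaussian E ρ) hmeas.aemeasurable
  have h := ProbabilityMeasure.tendsto_of_tendsto_charFun
    (μ := fun n ↦ ⟨walkMeasure ρ (coordinateSteps E n), hwalk n⟩)
    (μ₀ := ⟨(correlatedGaussian E ρ).map (WithLp.toLp 2), inferInstance⟩)
    (tendsto_charFun_walkMeasure hρ)
  have hFW : Continuous fun z : WithLp 2 (E × E) ↦ F (z.fst, z.snd) := hF.comp (by fun_prop)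
  have hlim := ProbabilityMeasure.tendsto_iff_forall_integral_tendsto.1 h
    (.ofNormedAddCommGroup (fun z ↦ F (z.fst, z.snd)) hFW C fun z ↦ hC _)
  simp only [BoundedContinuousFunction.coe_ofNormedAddCommGroup, ProbabilityMeasure.coe_mk] at hlim
  rwa [integral_map hmeas.aemeasurable hFW.aestronglyMeasurable] at hlim

lemma eventually_hasBorellDefectLE_walkMeasure {ρ : ℝ} (hρ0 : 0 ≤ ρ) (hρ1 : ρ < 1) (L : ℝ≥0)
    {δ ε : ℝ} (hδ : 0 < δ) (hε : 0 < ε) :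
    ∀ᶠ n in atTop, HasBorellDefectLE ρ L δ (walkMeasure ρ (coordinateSteps E n)) ε := by
  set D : ℝ := Module.finrank ℝ E * L ^ 2
  have hD : 0 ≤ D := by positivity
  obtain ⟨r, hr, hstep⟩ := exists_hasBorellDefectLE_signMeasure (E := E) hρ0 hρ1 L hδ
    (div_pos hε (by positivity : 0 < D + 1))
  have hsmall : Tendsto (fun n : ℕ ↦ L * (√n)⁻¹) atTop (𝓝 0) := by
    simpa using (tendsto_inv_atTop_zero.comp
      (tendsto_sqrt_atTop.comp tendsto_natCast_atTop_atTop)).const_mul (L : ℝ)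
  filter_upwards [hsmall.eventually (ge_mem_nhds hr), eventually_gt_atTop 0] with n hn hn0
  intro f g hf hg hf01 hg01
  have hwalk := hasBorellDefectLE_walkMeasure ⟨by linarith, hρ1.le⟩
    (fun v hv ↦ hstep v (by rwa [norm_of_mem_coordinateSteps hv])) f g hf hg hf01 hg01
  have htotal : ((coordinateSteps E n).map fun v ↦ ε / (D + 1) * (L * ‖v‖) ^ 2).sum
      = ε * (D / (D + 1)) := by
    rw [List.map_congr_left fun v hv ↦ by rw [norm_of_mem_coordinateSteps hv], List.map_const',
      List.sum_replicate, length_coordinateSteps, nsmul_eq_mul, mul_pow, inv_pow,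
      sq_sqrt n.cast_nonneg]
    have : (n : ℝ) ≠ 0 := Nat.cast_ne_zero.2 hn0.ne'
    push_cast
    simp only [D]
    field_simp
  rw [htotal] at hwalk
  have hle : ε * (D / (D + 1)) ≤ ε :=
    mul_le_of_le_one_right hε.le (div_le_one_of_le₀ (by linarith) (by linarith))
  linarith

lemma integral_borellFn_le_of_lipschitzWith {ρ : ℝ} (hρ0 : 0 ≤ ρ) (hρ1 : ρ < 1) {L : ℝ≥0}
    {f g : E → ℝ} (hf : LipschitzWith L f) (hg : LipschitzWith L g) {δ : ℝ} (hδ : 0 < δ)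
    (hf01 : ∀ x, f x ∈ Icc δ (1 - δ)) (hg01 : ∀ x, g x ∈ Icc δ (1 - δ)) :
    ∫ z, borellFn ρ (f z.1) (g z.2) ∂correlatedGaussian E ρ
      ≤ borellFn ρ (∫ x, f x ∂stdGaussian E) (∫ x, g x ∂stdGaussian E) := by
  have hρ : ρ ∈ Icc (-1) 1 := ⟨by linarith, hρ1.le⟩
  have hρsq : ρ ^ 2 ≤ 1 := (sq_le_one_iff_abs_le_one ρ).2 (abs_le.2 hρ)
  have hbound {x : ℝ} (hx : x ∈ Icc δ (1 - δ)) : ‖x‖ ≤ 1 :=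
    abs_le.2 ⟨by linarith [hx.1], by linarith [hx.2]⟩
  have hfst : ∫ z, f z.1 ∂correlatedGaussian E ρ = ∫ x, f x ∂stdGaussian E := by
    rw [← map_fst_correlatedGaussian E ρ,
      integral_map (by fun_prop) hf.continuous.aestronglyMeasurable]
  have hsnd : ∫ z, g z.2 ∂correlatedGaussian E ρ = ∫ x, g x ∂stdGaussian E := by
    rw [← map_snd_correlatedGaussian hρsq,
      integral_map (by fun_prop) hg.continuous.aestronglyMeasurable]
  have hf_lim := tendsto_integral_walkMeasure hρ (F := fun z : E × E ↦ f z.1)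
    (hf.continuous.comp continuous_fst) fun _ ↦ hbound (hf01 _)
  have hg_lim := tendsto_integral_walkMeasure hρ (F := fun z : E × E ↦ g z.2)
    (hg.continuous.comp continuous_snd) fun _ ↦ hbound (hg01 _)
  have hJ_lim := tendsto_integral_walkMeasure hρ (F := fun z : E × E ↦ borellFn ρ (f z.1) (g z.2))
    (C := 1) ((continuous_borellFn hρsq).comp
      ((hf.continuous.comp continuous_fst).prodMk (hg.continuous.comp continuous_snd)))
    fun _ ↦ abs_le.2 ⟨neg_one_lt_zero.le.trans (borellFn_mem_Icc ρ _ _).1,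
      (borellFn_mem_Icc ρ _ _).2⟩
  rw [hfst] at hf_lim
  rw [hsnd] at hg_lim
  refine le_of_forall_pos_le_add fun ε hε ↦ ?_
  refine le_of_tendsto_of_tendsto hJ_lim
    ((((continuous_borellFn hρsq).tendsto (_, _)).comp (hf_lim.prodMk_nhds hg_lim)).add_const ε) ?_
  filter_upwards [eventually_hasBorellDefectLE_walkMeasure (E := E) hρ0 hρ1 L hδ hε] with n hn
  exact hn f g hf hg hf01 hg01

end Walk

/-! ### Borell's inequality -/

section BorellInequality

lemma borellFn_one_one (ρ : ℝ) : borellFn ρ 1 1 = 1 := by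
  simp [borellFn, (gaussTail_lt_one _).le]

lemma borellFn_indicator {ρ : ℝ} (hρ : ρ ^ 2 ≤ 1) {α β : Type*} (A : Set α) (B : Set β)
    (z : α × β) :
    borellFn ρ (A.indicator 1 z.1) (B.indicator 1 z.2) = (A ×ˢ B).indicator 1 z := by
  by_cases hA : z.1 ∈ A <;> by_cases hB : z.2 ∈ B <;>
    simp [hA, hB, borellFn_one_one, borellFn_zero_left, borellFn_comm hρ _ 0]

variable {E : Type*} [NormedAddCommGroup E] [InnerProductSpace ℝ E] [FiniteDimensional ℝ E]
  [MeasurableSpace E] [BorelSpace E] {ρ : ℝ}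

/-- The functional form of Borell's inequality; on indicators it is the inequality for sets. -/
def SatisfiesBorell (ρ : ℝ) (f g : E → ℝ) : Prop :=
  ∫ z, borellFn ρ (f z.1) (g z.2) ∂correlatedGaussian E ρ
    ≤ borellFn ρ (∫ x, f x ∂stdGaussian E) (∫ x, g x ∂stdGaussian E)

lemma SatisfiesBorell.of_tendsto (hρ : ρ ^ 2 ≤ 1) {F G : ℕ → E → ℝ} {f g : E → ℝ}
    (hF : ∀ n, Measurable (F n)) (hG : ∀ n, Measurable (G n))
    (hF01 : ∀ n x, F n x ∈ Icc 0 1) (hG01 : ∀ n x, G n x ∈ Icc 0 1)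
    (hFf : ∀ x, Tendsto (F · x) atTop (𝓝 (f x))) (hGg : ∀ x, Tendsto (G · x) atTop (𝓝 (g x)))
    (h : ∀ n, SatisfiesBorell ρ (F n) (G n)) : SatisfiesBorell ρ f g := by
  have hnorm {x : ℝ} (hx : x ∈ Icc 0 1) : ‖x‖ ≤ 1 :=
    abs_le.2 ⟨neg_one_lt_zero.le.trans hx.1, hx.2⟩
  have hJ := (continuous_borellFn hρ).tendsto
  have hf_lim := tendsto_integral_of_dominated_convergence (μ := stdGaussian E) (fun _ ↦ 1)
    (fun n ↦ (hF n).aestronglyMeasurable) (integrable_const 1)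
    (fun n ↦ .of_forall fun x ↦ hnorm (hF01 n x)) (.of_forall hFf)
  have hg_lim := tendsto_integral_of_dominated_convergence (μ := stdGaussian E) (fun _ ↦ 1)
    (fun n ↦ (hG n).aestronglyMeasurable) (integrable_const 1)
    (fun n ↦ .of_forall fun x ↦ hnorm (hG01 n x)) (.of_forall hGg)
  have hJ_lim := tendsto_integral_of_dominated_convergence (μ := correlatedGaussian E ρ)
    (F := fun n z ↦ borellFn ρ (F n z.1) (G n z.2)) (f := fun z ↦ borellFn ρ (f z.1) (g z.2))
    (fun _ ↦ 1)
    (fun n ↦ ((continuous_borellFn hρ).measurable.comp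
      (((hF n).comp measurable_fst).prodMk ((hG n).comp measurable_snd))).aestronglyMeasurable)
    (integrable_const 1) (fun n ↦ .of_forall fun _ ↦ hnorm (borellFn_mem_Icc _ _ _))
    (.of_forall fun z ↦ (hJ (_, _)).comp ((hFf z.1).prodMk_nhds (hGg z.2)))
  exact le_of_tendsto_of_tendsto' hJ_lim ((hJ (_, _)).comp (hf_lim.prodMk_nhds hg_lim)) h

lemma satisfiesBorell_of_lipschitzWith (hρ0 : 0 ≤ ρ) (hρ1 : ρ < 1) {L : ℝ≥0} {f g : E → ℝ}
    (hf : LipschitzWith L f) (hg : LipschitzWith L g)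
    (hf01 : ∀ x, f x ∈ Icc 0 1) (hg01 : ∀ x, g x ∈ Icc 0 1) : SatisfiesBorell ρ f g := by
  let δ (n : ℕ) : ℝ := 2⁻¹ * (1 / (n + 1))
  have hδ (n : ℕ) : 0 < δ n := by positivity
  have hδ_half (n : ℕ) : δ n ≤ 2⁻¹ :=
    mul_le_of_le_one_right (by norm_num) (by simpa using Nat.one_div_le_one_div (α := ℝ) n.zero_le)
  have hδ_lim : Tendsto δ atTop (𝓝 0) := by
    simpa only [mul_zero] using (tendsto_one_div_add_atTop_nhds_zero_nat (𝕜 := ℝ)).const_mul 2⁻¹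
  let s (n : ℕ) (x : ℝ) : ℝ := δ n + (1 - 2 * δ n) * x
  have hs_mem {n : ℕ} {x : ℝ} (hx : x ∈ Icc 0 1) : s n x ∈ Icc (δ n) (1 - δ n) := by
    have := hδ_half n
    constructor <;> simp only [s] <;> nlinarith [hx.1, hx.2]
  have hs_mem' {n : ℕ} {x : ℝ} (hx : x ∈ Icc 0 1) : s n x ∈ Icc 0 1 :=
    Icc_subset_Icc (hδ n).le (sub_le_self 1 (hδ n).le) (hs_mem hx)
  have hs_lip (n : ℕ) : LipschitzWith 1 (s n) := LipschitzWith.of_dist_le_mul fun x y ↦ by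
    have : |1 - 2 * δ n| ≤ 1 := abs_le.2 ⟨by linarith [hδ_half n], by linarith [hδ n]⟩
    simpa [s, dist_eq, ← mul_sub, abs_mul] using mul_le_of_le_one_left (abs_nonneg (x - y)) this
  have hs_lim (x : ℝ) : Tendsto (s · x) atTop (𝓝 x) := by
    simpa [s] using hδ_lim.add (((hδ_lim.const_mul 2).const_sub 1).mul_const x)
  have hs_comp {f : E → ℝ} (hf : LipschitzWith L f) (n : ℕ) : LipschitzWith L (s n ∘ f) := by
    simpa using (hs_lip n).comp hf
  exact .of_tendsto ((sq_le_one_iff_abs_le_one ρ).2 (abs_le.2 ⟨by linarith, hρ1.le⟩))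
    (fun n ↦ (hs_comp hf n).continuous.measurable) (fun n ↦ (hs_comp hg n).continuous.measurable)
    (fun n x ↦ hs_mem' (hf01 x)) (fun n x ↦ hs_mem' (hg01 x))
    (fun x ↦ hs_lim (f x)) (fun x ↦ hs_lim (g x)) fun n ↦
    integral_borellFn_le_of_lipschitzWith hρ0 hρ1 (hs_comp hf n) (hs_comp hg n) (hδ n)
      (fun x ↦ hs_mem (hf01 x)) (fun x ↦ hs_mem (hg01 x))

lemma satisfiesBorell_indicator_of_isClosed (hρ0 : 0 ≤ ρ) (hρ1 : ρ < 1) {A B : Set E}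
    (hA : IsClosed A) (hB : IsClosed B) :
    SatisfiesBorell ρ (A.indicator 1) (B.indicator 1) := by
  have hr (n : ℕ) : (0 : ℝ) < 1 / (n + 1) := Nat.one_div_pos_of_nat
  let F (A : Set E) (n : ℕ) (x : E) : ℝ := thickenedIndicator (hr n) A x
  have hF_lip (A : Set E) (n : ℕ) : LipschitzWith (1 / (n + 1) : ℝ).toNNReal⁻¹ (F A n) :=
    lipschitzWith_thickenedIndicator (hr n) A
  have hF_mem (A : Set E) (n : ℕ) (x : E) : F A n x ∈ Icc 0 1 :=
    ⟨NNReal.coe_nonneg _, NNReal.coe_le_one.2 (thickenedIndicator_le_one _ _ _)⟩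
  have hF_lim {A : Set E} (hA : IsClosed A) (x : E) :
      Tendsto (F A · x) atTop (𝓝 (A.indicator 1 x)) := by
    have h := tendsto_pi_nhds.1 (thickenedIndicator_tendsto_indicator_closure hr
      tendsto_one_div_add_atTop_nhds_zero_nat A) x
    rw [hA.closure_eq] at h
    have hcoe : ((A.indicator (fun _ ↦ 1) x : ℝ≥0) : ℝ) = A.indicator 1 x := by
      by_cases hx : x ∈ A <;> simp [hx]
    rw [← hcoe]
    exact (NNReal.continuous_coe.tendsto _).comp h
  exact .of_tendsto ((sq_le_one_iff_abs_le_one ρ).2 (abs_le.2 ⟨by linarith, hρ1.le⟩))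
    (fun n ↦ (hF_lip A n).continuous.measurable) (fun n ↦ (hF_lip B n).continuous.measurable)
    (hF_mem A) (hF_mem B) (hF_lim hA) (hF_lim hB) fun n ↦
    satisfiesBorell_of_lipschitzWith hρ0 hρ1 (hF_lip A n) (hF_lip B n) (hF_mem A n) (hF_mem B n)

lemma correlatedGaussian_real_prod_le_of_isClosed (hρ0 : 0 ≤ ρ) (hρ1 : ρ < 1) {A B : Set E}
    (hA : IsClosed A) (hB : IsClosed B) :
    (correlatedGaussian E ρ).real (A ×ˢ B)
      ≤ borellFn ρ ((stdGaussian E).real A) ((stdGaussian E).real B) := by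
  have hρ : ρ ^ 2 ≤ 1 := (sq_le_one_iff_abs_le_one ρ).2 (abs_le.2 ⟨by linarith, hρ1.le⟩)
  have h := satisfiesBorell_indicator_of_isClosed hρ0 hρ1 hA hB
  simp only [SatisfiesBorell, borellFn_indicator hρ] at h
  rwa [integral_indicator_one hA.measurableSet, integral_indicator_one hB.measurableSet,
    integral_indicator_one (hA.measurableSet.prod hB.measurableSet)] at h

theorem correlatedGaussian_real_prod_le (hρ0 : 0 ≤ ρ) (hρ1 : ρ < 1) {A B : Set E}
    (hA : MeasurableSet A) (hB : MeasurableSet B) :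
    (correlatedGaussian E ρ).real (A ×ˢ B)
      ≤ borellFn ρ ((stdGaussian E).real A) ((stdGaussian E).real B) := by
  have hρ : ρ ^ 2 ≤ 1 := (sq_le_one_iff_abs_le_one ρ).2 (abs_le.2 ⟨by linarith, hρ1.le⟩)
  refine le_of_forall_pos_le_add fun ε hε ↦ ?_
  have hclosed {A : Set E} (hA : MeasurableSet A) :
      ∃ K ⊆ A, IsClosed K ∧ (stdGaussian E).real (A \ K) ≤ ε / 2 := by
    obtain ⟨K, hKA, hK, hlt⟩ := hA.exists_isClosed_sdiff_lt (measure_ne_top (stdGaussian E) A)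
      (ENNReal.ofReal_pos.2 (half_pos hε)).ne'
    exact ⟨K, hKA, hK, ENNReal.toReal_le_of_le_ofReal (half_pos hε).le hlt.le⟩
  obtain ⟨K, hKA, hK, hAK⟩ := hclosed hA
  obtain ⟨L, hLB, hL, hBL⟩ := hclosed hB
  have hfst : (correlatedGaussian E ρ).real (Prod.fst ⁻¹' (A \ K)) ≤ ε / 2 := by
    rwa [← map_measureReal_apply measurable_fst (hA.diff hK.measurableSet),
      map_fst_correlatedGaussian]
  have hsnd : (correlatedGaussian E ρ).real (Prod.snd ⁻¹' (B \ L)) ≤ ε / 2 := by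
    rwa [← map_measureReal_apply measurable_snd (hB.diff hL.measurableSet),
      map_snd_correlatedGaussian hρ]
  have hcover : A ×ˢ B ⊆ K ×ˢ L ∪ (Prod.fst ⁻¹' (A \ K) ∪ Prod.snd ⁻¹' (B \ L)) := by
    rintro z ⟨hzA, hzB⟩
    by_cases hzK : z.1 ∈ K <;> by_cases hzL : z.2 ∈ L <;> simp [hzA, hzB, hzK, hzL]
  calc (correlatedGaussian E ρ).real (A ×ˢ B)
    _ ≤ (correlatedGaussian E ρ).real (K ×ˢ L) + ((correlatedGaussian E ρ).real
        (Prod.fst ⁻¹' (A \ K)) + (correlatedGaussian E ρ).real (Prod.snd ⁻¹' (B \ L))) :=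
      (measureReal_mono hcover).trans ((measureReal_union_le _ _).trans
        (add_le_add_right (measureReal_union_le _ _) _))
    _ ≤ borellFn ρ ((stdGaussian E).real K) ((stdGaussian E).real L) + (ε / 2 + ε / 2) := by
      gcongr
      exact correlatedGaussian_real_prod_le_of_isClosed hρ0 hρ1 hK hL
    _ ≤ borellFn ρ ((stdGaussian E).real A) ((stdGaussian E).real B) + ε := by
      rw [add_halves]
      gcongr
      exact borellFn_mono (measureReal_mono hKA) (measureReal_mono hLB)

end BorellInequality

/-! ### The Borell functional on the diagonal -/

/-- The slope `√((1 - ρ) / (1 + ρ)) = (1 - ρ) / √(1 - ρ²)` for which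
`condTail ρ u u = gaussTail (diagSlope ρ * u)`. -/
def diagSlope (ρ : ℝ) : ℝ := √((1 - ρ) / (1 + ρ))

lemma diagSlope_pos {ρ : ℝ} (hρ : ρ ∈ Ioo (-1) 1) : 0 < diagSlope ρ :=
  sqrt_pos.2 (div_pos (by linarith [hρ.2]) (by linarith [hρ.1]))

lemma diagSlope_le_one {ρ : ℝ} (hρ : 0 ≤ ρ) : diagSlope ρ ≤ 1 :=
  sqrt_le_one.2 ((div_le_one (by linarith)).2 (by linarith))

lemma antitoneOn_diagSlope : AntitoneOn diagSlope (Ioo (-1) 1) := fun ρ hρ ρ' hρ' h ↦ by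
  refine sqrt_le_sqrt ?_
  rw [div_le_div_iff₀ (by linarith [hρ'.1]) (by linarith [hρ.1])]
  linarith

lemma continuousAt_diagSlope {ρ : ℝ} (hρ : -1 < ρ) : ContinuousAt diagSlope ρ :=
  continuous_sqrt.continuousAt.comp
    (ContinuousAt.div (by fun_prop) (by fun_prop) (by linarith))

lemma condTail_self {ρ : ℝ} (hρ : ρ ≤ 1) (u : ℝ) :
    condTail ρ u u = gaussTail (diagSlope ρ * u) := by
  have hsub : 0 ≤ 1 - ρ := by linarith
  have hslope : diagSlope ρ = (1 - ρ) / √(1 - ρ ^ 2) := by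
    rw [show 1 - ρ ^ 2 = (1 - ρ) * (1 + ρ) by ring, sqrt_mul hsub, ← div_div, div_sqrt,
      diagSlope, sqrt_div hsub]
  rw [condTail, hslope]
  ring_nf

lemma tailQuantile_nonneg {x : ℝ} (hx : x ∈ Ioc 0 (1 / 2)) : 0 ≤ tailQuantile x := by
  rw [← strictAnti_gaussTail.le_iff_ge, gaussTail_zero,
    gaussTail_tailQuantile ⟨hx.1, by linarith [hx.2]⟩]
  exact hx.2

/-- Half the derivative of `x ↦ borellFn ρ x x`, when `k = diagSlope ρ`. -/
def diagDeriv (k x : ℝ) : ℝ := gaussTail (k * tailQuantile x)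

lemma hasDerivAt_diagDeriv (k : ℝ) {x : ℝ} (hx : x ∈ Ioo 0 1) :
    HasDerivAt (diagDeriv k) (k * exp ((1 - k ^ 2) * tailQuantile x ^ 2 / 2)) x := by
  refine ((hasDerivAt_gaussTail _).comp x ((hasDerivAt_tailQuantile hx).const_mul k)).congr_deriv ?_
  have hφ : φ (k * tailQuantile x)
      = exp ((1 - k ^ 2) * tailQuantile x ^ 2 / 2) * φ (tailQuantile x) := by
    rw [stdGaussianPDF_eq, stdGaussianPDF_eq, mul_left_comm, ← exp_add]
    ring_nf
  have := (stdGaussianPDF_pos (tailQuantile x)).ne'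
  rw [hφ]
  field_simp

lemma concaveOn_diagDeriv {k : ℝ} (hk0 : 0 ≤ k) (hk1 : k ≤ 1) :
    ConcaveOn ℝ (Ioc 0 (1 / 2)) (diagDeriv k) := by
  have hderiv {x : ℝ} (hx : x ∈ Ioc (0 : ℝ) (1 / 2)) :=
    hasDerivAt_diagDeriv k ⟨hx.1, by linarith [hx.2]⟩
  refine AntitoneOn.concaveOn_of_deriv (convex_Ioc _ _)
    (fun x hx ↦ (hderiv hx).continuousAt.continuousWithinAt)
    (fun x hx ↦ (hderiv (interior_subset hx)).differentiableAt.differentiableWithinAt) ?_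
  intro x hx y hy hxy
  have hx := interior_subset hx
  have hy := interior_subset hy
  rw [(hderiv hx).deriv, (hderiv hy).deriv]
  have hQ : tailQuantile y ≤ tailQuantile x := by
    rwa [← strictAnti_gaussTail.le_iff_ge, gaussTail_tailQuantile ⟨hx.1, by linarith [hx.2]⟩,
      gaussTail_tailQuantile ⟨hy.1, by linarith [hy.2]⟩]
  have hQ0 := tailQuantile_nonneg hy
  have hk : 0 ≤ 1 - k ^ 2 := sub_nonneg.2 (pow_le_one₀ hk0 hk1)
  gcongr

lemma intervalIntegrable_diagDeriv (k : ℝ) {a : ℝ} (ha : a ∈ Icc 0 1) :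
    IntervalIntegrable (diagDeriv k) volume 0 a := by
  have hcont : ContinuousOn (diagDeriv k) (Ioo 0 1) :=
    fun x hx ↦ (hasDerivAt_diagDeriv k hx).continuousAt.continuousWithinAt
  have h : IntegrableOn (diagDeriv k) (Ioo 0 1) :=
    .of_mem_Icc 0 1 (hcont.aemeasurable measurableSet_Ioo)
      (.of_forall fun x ↦ ⟨(gaussTail_pos _).le, (gaussTail_lt_one _).le⟩)
  rw [intervalIntegrable_iff_integrableOn_Ioo_of_le ha.1]
  exact h.mono_set (Ioo_subset_Ioo_right ha.2)

lemma borellFn_self_eq_integral {ρ : ℝ} (hρ : ρ ∈ Ioo (-1) 1) {a : ℝ} (ha : a ∈ Ico 0 1) :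
    borellFn ρ a a = 2 * ∫ x in 0..a, diagDeriv (diagSlope ρ) x := by
  have hρsq : ρ ^ 2 < 1 := (sq_lt_one_iff_abs_lt_one ρ).2 (abs_lt.2 hρ)
  have hderiv (x : ℝ) (hx : x ∈ Ioo 0 a) :
      HasDerivAt (fun x ↦ borellFn ρ x x) (2 * diagDeriv (diagSlope ρ) x) x := by
    have hx : x ∈ Ioo 0 1 := ⟨hx.1, hx.2.trans ha.2⟩
    refine (hasDerivAt_borellFn_comp hρsq (hasDerivAt_id x) (hasDerivAt_id x) hx hx).congr_deriv ?_
    rw [id, condTail_self hρ.2.le, diagDeriv]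
    ring
  have hcont : Continuous fun x ↦ borellFn ρ x x :=
    (continuous_borellFn hρsq.le).comp (continuous_id.prodMk continuous_id)
  have hFTC := intervalIntegral.integral_eq_sub_of_hasDerivAt_of_le ha.1 hcont.continuousOn hderiv
    ((intervalIntegrable_diagDeriv _ ⟨ha.1, ha.2.le⟩).const_mul 2)
  rw [borellFn_zero_left, sub_zero, intervalIntegral.integral_const_mul] at hFTC
  exact hFTC.symm

/-- The conditional probability that the second of two `ρ`-correlated standard Gaussians lies in the
upper half-line of Gaussian measure `a`, given that the first one does. -/
def borellRatio (ρ a : ℝ) : ℝ := borellFn ρ a a / a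

lemma mul_borellRatio (ρ a : ℝ) : a * borellRatio ρ a = borellFn ρ a a := by
  rcases eq_or_ne a 0 with rfl | ha
  · rw [zero_mul, borellFn_zero_left]
  · exact mul_div_cancel₀ _ ha

lemma borellRatio_eq_integral {ρ : ℝ} (hρ : ρ ∈ Ioo (-1) 1) {a : ℝ} (ha : a ∈ Ioo 0 1) :
    borellRatio ρ a = 2 * ∫ v in 0..1, diagDeriv (diagSlope ρ) (a * v) := by
  rw [borellRatio, borellFn_self_eq_integral hρ ⟨ha.1.le, ha.2⟩,
    intervalIntegral.integral_comp_mul_left _ ha.1.ne', mul_zero, mul_one, smul_eq_mul]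
  ring

lemma intervalIntegrable_diagDeriv_mul (k : ℝ) {a : ℝ} (ha : a ∈ Ioc 0 1) :
    IntervalIntegrable (fun v ↦ diagDeriv k (a * v)) volume 0 1 := by
  simpa [ha.1.ne'] using (intervalIntegrable_diagDeriv k ⟨ha.1.le, ha.2⟩).comp_mul_left (c := a)

lemma concaveOn_borellRatio {ρ : ℝ} (hρ0 : 0 ≤ ρ) (hρ1 : ρ < 1) :
    ConcaveOn ℝ (Ioc 0 (1 / 2)) (borellRatio ρ) := by
  have hρ : ρ ∈ Ioo (-1) 1 := ⟨by linarith, hρ1⟩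
  have hsub {a : ℝ} (ha : a ∈ Ioc (0 : ℝ) (1 / 2)) : a ∈ Ioo 0 1 := ⟨ha.1, by linarith [ha.2]⟩
  have hInt {a : ℝ} (ha : a ∈ Ioc (0 : ℝ) (1 / 2)) :=
    intervalIntegrable_diagDeriv_mul (diagSlope ρ) (Ioo_subset_Ioc_self (hsub ha))
  have hscale {a v : ℝ} (ha : a ∈ Ioc (0 : ℝ) (1 / 2)) (hv : v ∈ Ioo 0 1) :
      a * v ∈ Ioc (0 : ℝ) (1 / 2) :=
    ⟨mul_pos ha.1 hv.1, (mul_le_of_le_one_right ha.1.le hv.2.le).trans ha.2⟩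
  refine ⟨convex_Ioc _ _, fun x hx y hy s t hs ht hst ↦ ?_⟩
  have hxy := convex_Ioc (0 : ℝ) (1 / 2) hx hy hs ht hst
  rw [borellRatio_eq_integral hρ (hsub hx), borellRatio_eq_integral hρ (hsub hy),
    borellRatio_eq_integral hρ (hsub hxy), smul_eq_mul, smul_eq_mul, mul_left_comm s,
    mul_left_comm t, ← mul_add, ← intervalIntegral.integral_const_mul,
    ← intervalIntegral.integral_const_mul, ← intervalIntegral.integral_add
    ((hInt hx).const_mul s) ((hInt hy).const_mul t)]
  refine mul_le_mul_of_nonneg_left (intervalIntegral.integral_mono_on_of_le_Ioo zero_le_one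
    (((hInt hx).const_mul s).add ((hInt hy).const_mul t)) (hInt hxy) fun v hv ↦ ?_) zero_le_two
  have h := (concaveOn_diagDeriv (diagSlope_pos hρ).le (diagSlope_le_one hρ0)).2
    (hscale hx hv) (hscale hy hv) hs ht hst
  simpa only [smul_eq_mul, add_mul, mul_assoc] using h

lemma sum_mul_borellFn_self_le {ρ : ℝ} (hρ0 : 0 ≤ ρ) (hρ1 : ρ < 1) {ι : Type*} {s : Finset ι}
    {w a : ι → ℝ} (hw : ∀ i ∈ s, 0 ≤ w i) (ha : ∀ i ∈ s, a i ∈ Icc 0 (1 / 2))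
    (hsum : ∑ i ∈ s, w i * a i = 1) :
    ∑ i ∈ s, w i * borellFn ρ (a i) (a i) ≤ borellRatio ρ (∑ i ∈ s, w i * a i ^ 2) := by
  -- Points with `a i = 0` carry no weight, so they may be moved into `(0, 1/2]`.
  let b (i : ι) : ℝ := if a i = 0 then 1 / 2 else a i
  have hb (i : ι) (hi : i ∈ s) : b i ∈ Ioc 0 (1 / 2) := by
    rcases eq_or_ne (a i) 0 with h | h
    · simp [b, h]
    · simpa [b, h] using And.intro ((ha i hi).1.lt_of_ne' h) (ha i hi).2
  have hweight (f : ℝ → ℝ) (i : ι) : w i * a i * f (b i) = w i * a i * f (a i) := by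
    rcases eq_or_ne (a i) 0 with h | h <;> simp [b, h]
  have hjensen := (concaveOn_borellRatio hρ0 hρ1).le_map_sum
    (fun i hi ↦ mul_nonneg (hw i hi) (ha i hi).1) hsum hb
  simp only [smul_eq_mul, hweight (borellRatio ρ), hweight fun x ↦ x, mul_assoc,
    mul_borellRatio] at hjensen
  simpa only [sq] using hjensen

lemma mul_stdGaussianPDF_le_one {x : ℝ} (hx : 0 ≤ x) : x * φ x ≤ 1 := by
  have hconst : (√(2 * π))⁻¹ ≤ 1 := by
    refine inv_le_one_of_one_le₀ (one_le_sqrt.2 ?_)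
    linarith [pi_gt_three]
  have hexp : x * exp (-x ^ 2 / 2) ≤ 1 := by
    rw [neg_div, exp_neg, ← div_eq_mul_inv, div_le_one (exp_pos _)]
    nlinarith [add_one_le_exp (x ^ 2 / 2), sq_nonneg (x - 1)]
  rw [stdGaussianPDF_eq, mul_left_comm]
  exact mul_le_one₀ hconst (by positivity) hexp

lemma gaussTail_mul_sub_le {k k' u : ℝ} (hk' : 0 < k') (hk : k' ≤ k) (hu : 0 ≤ u) :
    gaussTail (k' * u) - gaussTail (k * u) ≤ (k - k') / k' := by
  have hderiv (c : ℝ) : HasDerivAt (fun c ↦ -gaussTail (c * u)) (φ (c * u) * u) c := by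
    have hcomp : HasDerivAt (gaussTail ∘ (· * u)) (-φ (c * u) * u) c :=
      (hasDerivAt_gaussTail (c * u)).comp c (hasDerivAt_mul_const u)
    exact hcomp.neg.congr_deriv (by ring)
  have hbound (c : ℝ) (hc : c ∈ interior (Ici k')) :
      deriv (fun c ↦ -gaussTail (c * u)) c ≤ 1 / k' := by
    have hc : k' ≤ c := interior_subset hc
    rw [(hderiv c).deriv, le_div_iff₀ hk']
    calc φ (c * u) * u * k'
      _ ≤ φ (c * u) * u * c := by gcongr; exact mul_nonneg (stdGaussianPDF_pos _).le hu
      _ = c * u * φ (c * u) := by ring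
      _ ≤ 1 := mul_stdGaussianPDF_le_one (mul_nonneg (hk'.le.trans hc) hu)
  have h := (convex_Ici k').image_sub_le_mul_sub_of_deriv_le
    (fun c _ ↦ (hderiv c).continuousAt.continuousWithinAt)
    (fun c _ ↦ (hderiv c).differentiableAt.differentiableWithinAt) hbound k' self_mem_Ici k hk hk
  rw [neg_sub_neg, one_div_mul_eq_div] at h
  exact h

lemma borellRatio_le_add {ρ ρ' : ℝ} (hρ : -1 < ρ) (hρρ' : ρ ≤ ρ') (hρ' : ρ' < 1) {a : ℝ}
    (ha : a ∈ Ioc 0 (1 / 2)) :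
    borellRatio ρ' a
      ≤ borellRatio ρ a + 2 * ((diagSlope ρ - diagSlope ρ') / diagSlope ρ') := by
  have hρ_mem : ρ ∈ Ioo (-1) 1 := ⟨hρ, hρρ'.trans_lt hρ'⟩
  have hρ'_mem : ρ' ∈ Ioo (-1) 1 := ⟨hρ.trans_le hρρ', hρ'⟩
  have ha1 : a ∈ Ioo 0 1 := ⟨ha.1, by linarith [ha.2]⟩
  set c := (diagSlope ρ - diagSlope ρ') / diagSlope ρ'
  have hInt (k : ℝ) := intervalIntegrable_diagDeriv_mul k (Ioo_subset_Ioc_self ha1)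
  have hle : ∫ v in 0..1, diagDeriv (diagSlope ρ') (a * v)
      ≤ ∫ v in 0..1, (diagDeriv (diagSlope ρ) (a * v) + c) := by
    refine intervalIntegral.integral_mono_on_of_le_Ioo zero_le_one (hInt _)
      ((hInt _).add intervalIntegrable_const) fun v hv ↦ sub_le_iff_le_add'.1 ?_
    exact gaussTail_mul_sub_le (diagSlope_pos hρ'_mem) (antitoneOn_diagSlope hρ_mem hρ'_mem hρρ')
      (tailQuantile_nonneg ⟨mul_pos ha.1 hv.1,
        (mul_le_of_le_one_right ha.1.le hv.2.le).trans ha.2⟩)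
  rw [intervalIntegral.integral_add (hInt _) intervalIntegrable_const] at hle
  rw [borellRatio_eq_integral hρ_mem ha1, borellRatio_eq_integral hρ'_mem ha1]
  simp only [intervalIntegral.integral_const, sub_zero, one_smul] at hle
  linarith

lemma exists_gt_forall_borellRatio_le_add {ρ : ℝ} (hρ : ρ ∈ Ioo (-1) 1) {ε : ℝ} (hε : 0 < ε) :
    ∃ ρ' ∈ Ioo ρ 1, ∀ a ∈ Ioc (0 : ℝ) (1 / 2), borellRatio ρ' a ≤ borellRatio ρ a + ε := by
  have hcont : ContinuousAt (fun r ↦ 2 * ((diagSlope ρ - diagSlope r) / diagSlope r)) ρ := by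
    have h := continuousAt_diagSlope hρ.1
    exact continuousAt_const.mul ((continuousAt_const.sub h).div h (diagSlope_pos hρ).ne')
  have hlt : ∀ᶠ r in 𝓝[>] ρ, 2 * ((diagSlope ρ - diagSlope r) / diagSlope r) < ε :=
    (hcont.eventually_lt continuousAt_const (by simpa using hε)).filter_mono nhdsWithin_le_nhds
  obtain ⟨ρ', hρ'ε, hρ'⟩ := (hlt.and (Ioo_mem_nhdsGT hρ.2)).exists
  exact ⟨ρ', hρ', fun a ha ↦ (borellRatio_le_add hρ.1 hρ'.1.le hρ'.2 ha).trans (by gcongr)⟩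

lemma lambdaFn_eq_borellRatio (τ η : ℝ) :
    lambdaFn τ η = borellRatio (1 - τ ^ 2 / 2) (gaussTail η) := by
  have hmeas : MeasurableSet {z : ℝ × ℝ | η ≤ z.1 ∧ η ≤ z.2} :=
    (measurableSet_le measurable_const measurable_fst).inter
      (measurableSet_le measurable_const measurable_snd)
  rw [lambdaFn, borellRatio, borellFn_gaussTail, correlatedGaussian,
    map_measureReal_apply (by fun_prop) hmeas, stdGaussian_real,
    show 1 - (1 - τ ^ 2 / 2) ^ 2 = τ ^ 2 - τ ^ 4 / 4 by ring]
  rfl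

/-! ### Radial projection of Gaussian vectors -/

section Sphere

open Metric Module

section NormedSpace

variable {E : Type*} [NormedAddCommGroup E] [NormedSpace ℝ E]

/-- The radial projection `x ↦ x / ‖x‖` onto the unit sphere, sending `0` to `θ`. -/
def sphereProj (θ : sphere (0 : E) 1) (x : E) : sphere (0 : E) 1 :=
  ⟨if x = 0 then θ else ‖x‖⁻¹ • x, by
    split_ifs with hx
    · exact θ.2
    · exact mem_sphere_zero_iff_norm.2 (norm_smul_inv_norm hx)⟩

lemma coe_sphereProj (θ : sphere (0 : E) 1) {x : E} (hx : x ≠ 0) :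
    (sphereProj θ x : E) = ‖x‖⁻¹ • x :=
  if_neg hx

lemma homeomorphUnitSphereProd_fst (θ : sphere (0 : E) 1) (x : ({0}ᶜ : Set E)) :
    (homeomorphUnitSphereProd E x).1 = sphereProj θ x :=
  Subtype.ext <| by rw [coe_sphereProj θ x.2, homeomorphUnitSphereProd_apply_fst_coe]

variable [MeasurableSpace E] [BorelSpace E]

@[fun_prop]
lemma measurable_sphereProj [SecondCountableTopology E] (θ : sphere (0 : E) 1) :
    Measurable (sphereProj θ) :=
  (Measurable.ite (measurableSet_singleton 0) measurable_const (by fun_prop)).subtype_mk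

lemma map_sphereProj_withDensity_norm [FiniteDimensional ℝ E] [Nontrivial E] (μ : Measure E)
    [μ.IsAddHaarMeasure] (θ : sphere (0 : E) 1) {f : ℝ → ENNReal} (hf : Measurable f) :
    (μ.withDensity fun x ↦ f ‖x‖).map (sphereProj θ)
      = (∫⁻ r : Ioi (0 : ℝ), f r ∂Measure.volumeIoiPow (finrank ℝ E - 1)) • μ.toSphere := by
  ext S hS
  have hind : Measurable fun u ↦ S.indicator (1 : sphere (0 : E) 1 → ENNReal) u :=
    measurable_one.indicator hS
  have hrad : Measurable fun r : Ioi (0 : ℝ) ↦ f r := hf.comp measurable_subtype_coe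
  calc (μ.withDensity fun x ↦ f ‖x‖).map (sphereProj θ) S
    _ = ∫⁻ x, S.indicator 1 (sphereProj θ x) * f ‖x‖ ∂μ := by
      rw [Measure.map_apply (by fun_prop) hS, withDensity_apply _ (measurable_sphereProj θ hS),
        ← lintegral_indicator (measurable_sphereProj θ hS)]
      refine lintegral_congr fun x ↦ ?_
      by_cases hx : sphereProj θ x ∈ S <;> simp [hx]
    _ = ∫⁻ x : ({0}ᶜ : Set E), S.indicator 1 (sphereProj θ x) * f ‖(x : E)‖
          ∂μ.comap Subtype.val := by
      rw [lintegral_subtype_comap (measurableSet_singleton (0 : E)).compl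
        fun x ↦ S.indicator 1 (sphereProj θ x) * f ‖x‖, restrict_compl_singleton]
    _ = ∫⁻ p, S.indicator 1 p.1 * f p.2
          ∂μ.toSphere.prod (Measure.volumeIoiPow (finrank ℝ E - 1)) := by
      rw [← μ.measurePreserving_homeomorphUnitSphereProd.lintegral_comp (by fun_prop)]
      simp only [homeomorphUnitSphereProd_fst θ, homeomorphUnitSphereProd_apply_snd_coe]
    _ = _ := by
      rw [lintegral_prod_mul hind.aemeasurable hrad.aemeasurable, lintegral_indicator_one hS,
        mul_comm, Measure.smul_apply, smul_eq_mul]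

end NormedSpace

variable {E : Type*} [NormedAddCommGroup E] [InnerProductSpace ℝ E] [FiniteDimensional ℝ E]
  [MeasurableSpace E] [BorelSpace E]

lemma stdGaussian_eq_withDensity : stdGaussian E = (volume : Measure E).withDensity fun x ↦
    ENNReal.ofReal (((2 * π) ^ (finrank ℝ E / 2 : ℝ))⁻¹ * exp (-‖x‖ ^ 2 / 2)) := by
  set C : ℝ := (2 * π) ^ (finrank ℝ E / 2 : ℝ) with hC
  have hC0 : 0 < C := by positivity
  have hfourier (t : E) (x : E) : (C⁻¹ * exp (-‖x‖ ^ 2 / 2)) • Complex.exp (⟪x, t⟫ * Complex.I)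
      = (C : ℂ)⁻¹ * Complex.exp (-(1 / 2) * ‖x‖ ^ 2 + Complex.I * ⟪t, x⟫) := by
    rw [Complex.exp_add, real_inner_comm, Complex.real_smul]
    push_cast
    ring_nf
  have hInt : Integrable fun x : E ↦ C⁻¹ * exp (-‖x‖ ^ 2 / 2) := by
    have h := (GaussianFourier.integrable_cexp_neg_mul_sq_norm_add (b := 1 / 2) (by norm_num)
      Complex.I (0 : E)).const_mul (C : ℂ)⁻¹
    simp only [← hfourier, inner_zero_right, Complex.ofReal_zero, zero_mul, Complex.exp_zero,
      Complex.real_smul, mul_one] at h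
    exact h.re
  have := isFiniteMeasure_withDensity_ofReal hInt.2
  refine Measure.ext_of_charFun (funext fun t ↦ ?_)
  rw [charFun_stdGaussian, charFun_apply, integral_withDensity_eq_integral_toReal_smul
    (by fun_prop) (Eventually.of_forall fun _ ↦ ENNReal.ofReal_lt_top)]
  have hnonneg (x : E) : 0 ≤ C⁻¹ * exp (-‖x‖ ^ 2 / 2) := by positivity
  simp only [ENNReal.toReal_ofReal (hnonneg _), hfourier]
  have hCC : (C : ℂ) = (π / (1 / 2)) ^ (finrank ℝ E / 2 : ℂ) := by
    rw [hC, Complex.ofReal_cpow (by positivity)]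
    push_cast
    ring_nf
  rw [integral_const_mul, GaussianFourier.integral_cexp_neg_mul_sq_norm_add (by norm_num), ← hCC,
    inv_mul_cancel_left₀ (by exact_mod_cast hC0.ne'), Complex.I_sq]
  ring_nf

lemma map_sphereProj_stdGaussian [Nontrivial E] (θ : sphere (0 : E) 1) :
    (stdGaussian E).map (sphereProj θ)
      = ((volume : Measure E).toSphere univ)⁻¹ • (volume : Measure E).toSphere := by
  have h := map_sphereProj_withDensity_norm volume θ
    (f := fun r ↦ ENNReal.ofReal (((2 * π) ^ (finrank ℝ E / 2 : ℝ))⁻¹ * exp (-r ^ 2 / 2)))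
    (by fun_prop)
  rw [← stdGaussian_eq_withDensity] at h
  have := Measure.isProbabilityMeasure_map (μ := stdGaussian E)
    (measurable_sphereProj θ).aemeasurable
  have hmass := measure_univ (μ := (stdGaussian E).map (sphereProj θ))
  rw [h, Measure.smul_apply, smul_eq_mul] at hmass
  rw [h, ENNReal.eq_inv_of_mul_eq_one_left hmass]

end Sphere

/-! ### Alignment of correlated Gaussian vectors -/

section Alignment

variable {E : Type*} [NormedAddCommGroup E] [InnerProductSpace ℝ E]

/-- The excess of `⟪x, y⟫` over `ρ (‖x‖² + ‖y‖²) / 2`. It is an additive function of the coordinates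
of `x` and `y`, and where it is positive the angle between `x` and `y` has cosine at least `ρ`. -/
def alignmentExcess (ρ : ℝ) (z : E × E) : ℝ := ⟪z.1, z.2⟫ - ρ / 2 * (‖z.1‖ ^ 2 + ‖z.2‖ ^ 2)

lemma ne_zero_of_alignmentExcess_pos {ρ : ℝ} (hρ : 0 ≤ ρ) {x y : E}
    (h : 0 < alignmentExcess ρ (x, y)) : x ≠ 0 ∧ y ≠ 0 := by
  refine ⟨?_, ?_⟩ <;> rintro rfl <;> refine h.not_ge ?_ <;>
    simp only [alignmentExcess, inner_zero_left, inner_zero_right, zero_sub, neg_nonpos] <;>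
    positivity

lemma dist_sphereProj_le (θ : Metric.sphere (0 : E) 1) {τ : ℝ} (hτ : 0 ≤ τ)
    (hρ : 0 ≤ 1 - τ ^ 2 / 2) {x y : E} (h : 0 < alignmentExcess (1 - τ ^ 2 / 2) (x, y)) :
    dist (sphereProj θ x) (sphereProj θ y) ≤ τ := by
  obtain ⟨hx, hy⟩ := ne_zero_of_alignmentExcess_pos hρ h
  set ρ := 1 - τ ^ 2 / 2 with hρτ
  have hinner : ρ * (‖x‖ * ‖y‖) ≤ ⟪x, y⟫ := by
    have hexcess : 0 < ⟪x, y⟫ - ρ / 2 * (‖x‖ ^ 2 + ‖y‖ ^ 2) := h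
    nlinarith [mul_nonneg hρ (sq_nonneg (‖x‖ - ‖y‖))]
  have hcos : ρ ≤ ⟪‖x‖⁻¹ • x, ‖y‖⁻¹ • y⟫ := by
    rw [real_inner_smul_left, real_inner_smul_right, ← mul_assoc, ← mul_inv, inv_mul_eq_div,
      le_div_iff₀ (mul_pos (norm_pos_iff.2 hx) (norm_pos_iff.2 hy))]
    exact hinner
  rw [Subtype.dist_eq, coe_sphereProj θ hx, coe_sphereProj θ hy, dist_eq_norm]
  refine abs_le_of_sq_le_sq' ?_ hτ |>.2
  have hnorm {v : E} (hv : v ≠ 0) : ‖‖v‖⁻¹ • v‖ = 1 := norm_smul_inv_norm hv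
  rw [norm_sub_sq_real, hnorm hx, hnorm hy]
  linarith

lemma measurable_alignmentExcess [SecondCountableTopology E] [MeasurableSpace E] [BorelSpace E]
    (ρ : ℝ) : Measurable (alignmentExcess ρ : E × E → ℝ) := by
  unfold alignmentExcess
  fun_prop

end Alignment

lemma measureReal_pi_sum_le_zero_le {ι Ω : Type*} [Fintype ι] [Nonempty ι] [MeasurableSpace Ω]
    {μ : Measure Ω} [IsProbabilityMeasure μ] {f : Ω → ℝ} (hf : MemLp f 2 μ) (hmean : 0 < μ[f]) :
    (Measure.pi fun _ : ι ↦ μ).real {ω | ∑ i, f (ω i) ≤ 0}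
      ≤ Var[f; μ] / μ[f] ^ 2 / Fintype.card ι := by
  set m : ℝ := μ[f]
  set S : (ι → Ω) → ℝ := ∑ i, fun ω ↦ f (ω i) with hS
  have hcoord (i : ι) : MemLp (fun ω : ι → Ω ↦ f (ω i)) 2 (Measure.pi fun _ ↦ μ) :=
    hf.comp_measurePreserving (measurePreserving_eval (fun _ ↦ μ) i)
  have hvar : Var[S; Measure.pi fun _ ↦ μ] = Fintype.card ι * Var[f; μ] := by
    rw [hS, variance_sum_pi (X := fun _ ↦ f) fun _ ↦ hf, Finset.sum_const, Finset.card_univ,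
      nsmul_eq_mul]
  have hS_mean : ∫ ω, S ω ∂(Measure.pi fun _ ↦ μ) = Fintype.card ι * m := by
    simp only [hS, Finset.sum_apply]
    rw [integral_finsetSum _ fun i _ ↦ (hcoord i).integrable one_le_two]
    simp only [integral_comp_eval (μ := fun _ : ι ↦ μ) hf.1, Finset.sum_const, Finset.card_univ,
      nsmul_eq_mul, m]
  have hpos : 0 < Fintype.card ι * m := by positivity
  have hsub : {ω | ∑ i, f (ω i) ≤ 0} ⊆ {ω | Fintype.card ι * m ≤ |S ω - Fintype.card ι * m|} := by
    intro ω (hω : ∑ i, f (ω i) ≤ 0)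
    have hSω : S ω ≤ 0 := by simpa only [hS, Finset.sum_apply] using hω
    rw [mem_ofPred_eq, le_abs]
    exact Or.inr (by linarith)
  have hS_memLp : MemLp S 2 (Measure.pi fun _ ↦ μ) := memLp_finsetSum' _ fun i _ ↦ hcoord i
  have hchebyshev := meas_ge_le_variance_div_sq hS_memLp hpos
  rw [hS_mean, hvar] at hchebyshev
  calc (Measure.pi fun _ : ι ↦ μ).real {ω | ∑ i, f (ω i) ≤ 0}
    _ ≤ Fintype.card ι * Var[f; μ] / (Fintype.card ι * m) ^ 2 := by
      refine ENNReal.toReal_le_of_le_ofReal ?_ ((measure_mono hsub).trans hchebyshev)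
      have := variance_nonneg f μ
      positivity
    _ = Var[f; μ] / m ^ 2 / Fintype.card ι := by field_simp

lemma map_pi_correlatedGaussian (ι : Type*) [Fintype ι] (ρ : ℝ) :
    (Measure.pi fun _ : ι ↦ correlatedGaussian ℝ ρ).map
        (fun ω ↦ (WithLp.toLp 2 fun i ↦ (ω i).1, WithLp.toLp 2 fun i ↦ (ω i).2))
      = correlatedGaussian (EuclideanSpace ℝ ι) ρ := by
  have hpi : Measure.pi (fun _ : ι ↦ correlatedGaussian ℝ ρ)
      = (Measure.pi fun _ : ι ↦ (gaussianReal 0 1).prod (gaussianReal 0 1)).map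
        fun ω i ↦ ((ω i).1, ρ • (ω i).1 + √(1 - ρ ^ 2) • (ω i).2) := by
    simp only [correlatedGaussian, stdGaussian_real]
    exact (Measure.pi_map_pi (f := fun _ (z : ℝ × ℝ) ↦ (z.1, ρ • z.1 + √(1 - ρ ^ 2) • z.2))
      fun _ ↦ by fun_prop).symm
  rw [hpi, correlatedGaussian, ← map_pi_eq_stdGaussian, Measure.map_prod_map _ _ (by fun_prop)
    (by fun_prop), ← (measurePreserving_arrowProdEquivProdArrow ℝ ℝ ι _ _).map_eq,
    Measure.map_map (by fun_prop) (by fun_prop), Measure.map_map (by fun_prop) (by fun_prop),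
    Measure.map_map (by fun_prop) (by fun_prop)]
  rfl

lemma alignmentExcess_toLp {ι : Type*} [Fintype ι] (ρ : ℝ) (x y : ι → ℝ) :
    alignmentExcess ρ (WithLp.toLp 2 x, WithLp.toLp 2 y)
      = ∑ i, alignmentExcess ρ (x i, y i) := by
  simp only [alignmentExcess, PiLp.inner_apply, EuclideanSpace.norm_sq_eq,
    ← Finset.sum_add_distrib, Finset.mul_sum, Finset.sum_sub_distrib]

lemma alignmentExcess_real (ρ : ℝ) :
    alignmentExcess ρ = fun z : ℝ × ℝ ↦ z.1 * z.2 - ρ / 2 * (z.1 ^ 2 + z.2 ^ 2) := by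
  ext z
  simp only [alignmentExcess, norm_eq_abs, sq_abs, Real.inner_apply]

lemma memLp_alignmentExcess {ρ : ℝ} (hρ : ρ ^ 2 ≤ 1) (ρ₀ : ℝ) :
    MemLp (alignmentExcess ρ₀) 2 (correlatedGaussian ℝ ρ) := by
  have hholder : ENNReal.HolderTriple 4 4 2 := ⟨by
    rw [show (4 : ENNReal) = 2 * 2 by norm_num, ENNReal.mul_inv (by simp) (by simp), ← add_mul,
      ENNReal.inv_two_add_inv_two, one_mul]⟩
  have hid : MemLp id 4 (stdGaussian ℝ) := IsGaussian.memLp_id _ 4 (by norm_num)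
  have hX : MemLp (fun z : ℝ × ℝ ↦ z.1) 4 (correlatedGaussian ℝ ρ) :=
    hid.comp_measurePreserving ⟨measurable_fst, map_fst_correlatedGaussian ℝ ρ⟩
  have hY : MemLp (fun z : ℝ × ℝ ↦ z.2) 4 (correlatedGaussian ℝ ρ) :=
    hid.comp_measurePreserving ⟨measurable_snd, map_snd_correlatedGaussian hρ⟩
  have h : MemLp (fun z : ℝ × ℝ ↦ z.1 * z.2 - ρ₀ / 2 * (z.1 * z.1 + z.2 * z.2)) 2
      (correlatedGaussian ℝ ρ) :=
    (hY.mul' hX).sub (((hX.mul' hX).add (hY.mul' hY)).const_mul _)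
  simpa only [alignmentExcess_real, sq] using h

lemma integral_sq_stdGaussian_real : ∫ x, x ^ 2 ∂stdGaussian ℝ = 1 := by
  rw [stdGaussian_real]
  have h := variance_id_gaussianReal (μ := 0) (v := 1)
  rw [variance_eq_integral aemeasurable_id] at h
  simpa using h

lemma integrable_sq_stdGaussian_real : Integrable (fun x ↦ x ^ 2) (stdGaussian ℝ) :=
  (IsGaussian.memLp_id (stdGaussian ℝ) 2 (by norm_num)).integrable_sq

lemma integral_mul_correlatedGaussian (ρ : ℝ) :
    ∫ z, z.1 * z.2 ∂correlatedGaussian ℝ ρ = ρ := by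
  have hid : Integrable (fun x ↦ x) (stdGaussian ℝ) := IsGaussian.integrable_id
  have hexpand (z : ℝ × ℝ) : z.1 * (ρ • z.1 + √(1 - ρ ^ 2) • z.2)
      = ρ * z.1 ^ 2 + √(1 - ρ ^ 2) * (z.1 * z.2) := by
    simp only [smul_eq_mul]
    ring
  rw [correlatedGaussian, integral_map (by fun_prop) (by fun_prop)]
  simp only [hexpand]
  rw [integral_add ((integrable_sq_stdGaussian_real.comp_fst _).const_mul ρ)
    ((hid.mul_prod hid).const_mul _), integral_const_mul, integral_const_mul,
    integral_fun_fst fun x ↦ x ^ 2, integral_prod_mul (fun x ↦ x) fun x ↦ x,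
    integral_sq_stdGaussian_real, integral_id_stdGaussian]
  simp

lemma integral_alignmentExcess {ρ : ℝ} (hρ : ρ ^ 2 ≤ 1) (ρ₀ : ℝ) :
    ∫ z, alignmentExcess ρ₀ z ∂correlatedGaussian ℝ ρ = ρ - ρ₀ := by
  have hfst : MeasurePreserving Prod.fst (correlatedGaussian ℝ ρ) (stdGaussian ℝ) :=
    ⟨measurable_fst, map_fst_correlatedGaussian ℝ ρ⟩
  have hsnd : MeasurePreserving Prod.snd (correlatedGaussian ℝ ρ) (stdGaussian ℝ) :=
    ⟨measurable_snd, map_snd_correlatedGaussian hρ⟩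
  have hid : MemLp id 2 (stdGaussian ℝ) := IsGaussian.memLp_id _ 2 (by norm_num)
  have hsq_fst : ∫ z, z.1 ^ 2 ∂correlatedGaussian ℝ ρ = 1 := by
    rw [← integral_sq_stdGaussian_real, ← hfst.map_eq, integral_map (by fun_prop) (by fun_prop)]
  have hsq_snd : ∫ z, z.2 ^ 2 ∂correlatedGaussian ℝ ρ = 1 := by
    rw [← integral_sq_stdGaussian_real, ← hsnd.map_eq, integral_map (by fun_prop) (by fun_prop)]
  have hmul_int : Integrable (fun z ↦ z.1 * z.2) (correlatedGaussian ℝ ρ) :=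
    (hid.comp_measurePreserving hfst).integrable_mul (hid.comp_measurePreserving hsnd)
  have hfst_int : Integrable (fun z ↦ z.1 ^ 2) (correlatedGaussian ℝ ρ) :=
    hfst.integrable_comp_of_integrable integrable_sq_stdGaussian_real
  have hsnd_int : Integrable (fun z ↦ z.2 ^ 2) (correlatedGaussian ℝ ρ) :=
    hsnd.integrable_comp_of_integrable integrable_sq_stdGaussian_real
  have hsum_int :
      Integrable (fun z ↦ ρ₀ / 2 * (z.1 ^ 2 + z.2 ^ 2)) (correlatedGaussian ℝ ρ) :=
    (hfst_int.add hsnd_int).const_mul _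
  simp only [alignmentExcess_real]
  rw [integral_sub hmul_int hsum_int, integral_const_mul, integral_add hfst_int hsnd_int, hsq_fst,
    hsq_snd, integral_mul_correlatedGaussian]
  ring

lemma tendsto_measureReal_alignmentExcess_nonpos {ρ₀ ρ : ℝ} (hρ₀ : ρ₀ < ρ) (hρ : ρ ^ 2 ≤ 1) :
    Tendsto (fun d : ℕ ↦ (correlatedGaussian (EuclideanSpace ℝ (Fin d)) ρ).real
      {z | alignmentExcess ρ₀ z ≤ 0}) atTop (𝓝 0) := by
  have hmean := integral_alignmentExcess hρ ρ₀
  refine squeeze_zero' (Eventually.of_forall fun _ ↦ measureReal_nonneg)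
    ((eventually_ge_atTop 1).mono fun d hd ↦ ?_) (tendsto_const_div_atTop_nhds_zero_nat
      (Var[alignmentExcess ρ₀; correlatedGaussian ℝ ρ] / (ρ - ρ₀) ^ 2))
  have : Nonempty (Fin d) := ⟨⟨0, hd⟩⟩
  have hmeas : MeasurableSet {z : EuclideanSpace ℝ (Fin d) × EuclideanSpace ℝ (Fin d) |
      alignmentExcess ρ₀ z ≤ 0} := measurable_alignmentExcess ρ₀ measurableSet_Iic
  have h := measureReal_pi_sum_le_zero_le (ι := Fin d) (memLp_alignmentExcess hρ ρ₀)
    (by rw [hmean]; exact sub_pos.2 hρ₀)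
  rw [hmean, Fintype.card_fin] at h
  rw [← map_pi_correlatedGaussian, map_measureReal_apply (by fun_prop) hmeas]
  simpa only [preimage_ofPred_eq, alignmentExcess_toLp] using h

/-! ### Collision probabilities -/

section Collision

variable {Ω β ι : Type*} [MeasurableSpace Ω] [MeasurableSpace β] [MeasurableSingletonClass β]
  [Fintype ι]

section Countable

variable [Countable β]

lemma measurableSet_collision {g : Ω → β} (hg : Measurable g) :
    MeasurableSet {z : Ω × Ω | g z.1 = g z.2} :=
  measurableSet_eq_fun (hg.comp measurable_fst) (hg.comp measurable_snd)

lemma measureReal_prod_collision_comp {Ω' : Type*} [MeasurableSpace Ω'] (μ : Measure Ω)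
    [IsFiniteMeasure μ] {f : Ω → Ω'} (hf : Measurable f) {g : Ω' → β} (hg : Measurable g) :
    (μ.prod μ).real {z | g (f z.1) = g (f z.2)}
      = ((μ.map f).prod (μ.map f)).real {z | g z.1 = g z.2} := by
  rw [Measure.map_prod_map _ _ hf hf,
    map_measureReal_apply (hf.prodMap hf) (measurableSet_collision hg)]
  rfl

end Countable

section Fintype

variable [Fintype β]

lemma sum_measureReal_fiber (μ : Measure Ω) [IsProbabilityMeasure μ] {g : Ω → β}
    (hg : Measurable g) : ∑ t, μ.real (g ⁻¹' {t}) = 1 := by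
  rw [sum_measureReal_preimage_singleton _ fun t _ ↦ hg (measurableSet_singleton t),
    Finset.coe_univ, preimage_univ, probReal_univ]

lemma measureReal_collision_eq_sum (κ : Measure (Ω × Ω)) [IsFiniteMeasure κ] {g : Ω → β}
    (hg : Measurable g) :
    κ.real {z | g z.1 = g z.2} = ∑ t, κ.real ((g ⁻¹' {t}) ×ˢ (g ⁻¹' {t})) := by
  have hunion : {z : Ω × Ω | g z.1 = g z.2} = ⋃ t, (g ⁻¹' {t}) ×ˢ (g ⁻¹' {t}) := by
    ext z
    simp [eq_comm]
  have hdisj : Pairwise (Function.onFun Disjoint fun t ↦ (g ⁻¹' {t}) ×ˢ (g ⁻¹' {t})) :=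
    fun t t' htt' ↦ disjoint_prod.2 (Or.inl ((disjoint_singleton.2 htt').preimage g))
  rw [hunion, measureReal_iUnion_fintype hdisj
    fun t ↦ (hg (measurableSet_singleton t)).prod (hg (measurableSet_singleton t))]

lemma measureReal_prod_collision_eq_sum_sq (μ : Measure Ω) [IsFiniteMeasure μ] {g : Ω → β}
    (hg : Measurable g) :
    (μ.prod μ).real {z | g z.1 = g z.2} = ∑ t, μ.real (g ⁻¹' {t}) ^ 2 := by
  simp only [measureReal_collision_eq_sum _ hg, measureReal_prod_prod, sq]

end Fintype

lemma measureReal_prod_collision_le [Finite β] (μ : Measure Ω) [IsProbabilityMeasure μ] {g : Ω → β}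
    (hg : Measurable g) {c : ℝ} (hc : ∀ t, μ.real (g ⁻¹' {t}) ≤ c) :
    (μ.prod μ).real {z | g z.1 = g z.2} ≤ c := by
  cases nonempty_fintype β
  calc (μ.prod μ).real {z | g z.1 = g z.2}
    _ = ∑ t, μ.real (g ⁻¹' {t}) * μ.real (g ⁻¹' {t}) := by
      simp only [measureReal_prod_collision_eq_sum_sq μ hg, sq]
    _ ≤ ∑ t, c * μ.real (g ⁻¹' {t}) := by gcongr; exact hc _
    _ = c := by rw [← Finset.mul_sum, sum_measureReal_fiber μ hg, mul_one]

lemma sum_mul_measureReal_prod_collision_le [Finite β] (μ : Measure Ω) [IsProbabilityMeasure μ]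
    {w : ι → ℝ} (hw : ∀ i, 0 ≤ w i) (hsum : ∑ i, w i = 1) {g : ι → Ω → β}
    (hg : ∀ i, Measurable (g i)) {c : ℝ} (hc : ∀ i t, μ.real (g i ⁻¹' {t}) ≤ c) :
    ∑ i, w i * (μ.prod μ).real {z | g i z.1 = g i z.2} ≤ c :=
  calc ∑ i, w i * (μ.prod μ).real {z | g i z.1 = g i z.2}
    _ ≤ ∑ i, w i * c := by
      gcongr with i
      · exact hw i
      · exact measureReal_prod_collision_le μ (hg i) (hc i)
    _ = c := by rw [← Finset.sum_mul, hsum, one_mul]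

lemma le_sum_mul_measureReal_add {κ : Measure Ω} [IsProbabilityMeasure κ] {w : ι → ℝ}
    (hw : ∀ i, 0 ≤ w i) {C : ι → Set Ω} (hC : ∀ i, MeasurableSet (C i)) {B : Set Ω}
    (hB : MeasurableSet B) {p : ℝ} (hp1 : p ≤ 1)
    (hp : ∀ z ∉ B, p ≤ ∑ i, w i * (C i).indicator 1 z) :
    p ≤ ∑ i, w i * κ.real (C i) + κ.real B := by
  have hInt {S : Set Ω} (hS : MeasurableSet S) : Integrable (S.indicator (1 : Ω → ℝ)) κ :=
    (integrable_const 1).indicator hS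
  have hsum_int : Integrable (fun z ↦ ∑ i, w i * (C i).indicator (1 : Ω → ℝ) z) κ :=
    integrable_finsetSum _ fun i _ ↦ (hInt (hC i)).const_mul _
  have hpoint (z : Ω) : p ≤ ∑ i, w i * (C i).indicator 1 z + B.indicator 1 z := by
    by_cases hz : z ∈ B
    · rw [indicator_of_mem hz, Pi.one_apply]
      have : 0 ≤ ∑ i, w i * (C i).indicator (1 : Ω → ℝ) z :=
        Finset.sum_nonneg fun i _ ↦
          mul_nonneg (hw i) (indicator_nonneg (fun _ _ ↦ zero_le_one) _)
      linarith
    · rw [indicator_of_notMem hz, add_zero]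
      exact hp z hz
  calc p
    _ = ∫ _, p ∂κ := by simp
    _ ≤ ∫ z, (∑ i, w i * (C i).indicator 1 z + B.indicator 1 z) ∂κ :=
      integral_mono (integrable_const p) (hsum_int.add (hInt hB)) hpoint
    _ = ∑ i, w i * κ.real (C i) + κ.real B := by
      rw [integral_add hsum_int (hInt hB),
        integral_finsetSum _ fun i _ ↦ (hInt (hC i)).const_mul _]
      simp only [integral_const_mul, integral_indicator_one (hC _), integral_indicator_one hB]

variable {E : Type*} [NormedAddCommGroup E] [InnerProductSpace ℝ E] [FiniteDimensional ℝ E]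
  [MeasurableSpace E] [BorelSpace E]

lemma sum_mul_correlatedGaussian_collision_le [Finite β] {ρ : ℝ} (hρ0 : 0 ≤ ρ) (hρ1 : ρ < 1)
    {w : ι → ℝ} (hw : ∀ i, 0 ≤ w i) (hsum : ∑ i, w i = 1) {g : ι → E → β}
    (hg : ∀ i, Measurable (g i)) (hhalf : ∀ i t, (stdGaussian E).real (g i ⁻¹' {t}) ≤ 1 / 2) :
    ∑ i, w i * (correlatedGaussian E ρ).real {z | g i z.1 = g i z.2}
      ≤ borellRatio ρ
          (∑ i, w i * ((stdGaussian E).prod (stdGaussian E)).real {z | g i z.1 = g i z.2}) := by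
  cases nonempty_fintype β
  set a : ι × β → ℝ := fun x ↦ (stdGaussian E).real (g x.1 ⁻¹' {x.2})
  have hlevel (i : ι) (t : β) : MeasurableSet (g i ⁻¹' {t}) := hg i (measurableSet_singleton t)
  have hmass : ∑ x : ι × β, w x.1 * a x = 1 := by
    simp only [Fintype.sum_prod_type, ← Finset.mul_sum, a, sum_measureReal_fiber _ (hg _),
      mul_one, hsum]
  calc ∑ i, w i * (correlatedGaussian E ρ).real {z | g i z.1 = g i z.2}
    _ = ∑ x : ι × β,
          w x.1 * (correlatedGaussian E ρ).real ((g x.1 ⁻¹' {x.2}) ×ˢ (g x.1 ⁻¹' {x.2})) := by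
      simp only [Fintype.sum_prod_type, ← Finset.mul_sum, measureReal_collision_eq_sum _ (hg _)]
    _ ≤ ∑ x : ι × β, w x.1 * borellFn ρ (a x) (a x) := by
      gcongr with x
      · exact hw x.1
      · exact correlatedGaussian_real_prod_le hρ0 hρ1 (hlevel _ _) (hlevel _ _)
    _ ≤ borellRatio ρ (∑ x : ι × β, w x.1 * a x ^ 2) :=
      sum_mul_borellFn_self_le hρ0 hρ1 (fun x _ ↦ hw x.1)
        (fun x _ ↦ ⟨measureReal_nonneg, hhalf x.1 x.2⟩) hmass
    _ = _ := by
      simp only [Fintype.sum_prod_type, ← Finset.mul_sum, a,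
        measureReal_prod_collision_eq_sum_sq _ (hg _)]

end Collision

section SphereMeasure

variable {d : ℕ} [NeZero d]

lemma map_sphereProj_stdGaussian_euclidean
    (θ : Metric.sphere (0 : EuclideanSpace ℝ (Fin d)) 1) :
    (stdGaussian (EuclideanSpace ℝ (Fin d))).map (sphereProj θ) = sphereMeasure d :=
  map_sphereProj_stdGaussian θ

instance : Nonempty (Metric.sphere (0 : EuclideanSpace ℝ (Fin d)) 1) :=
  (NormedSpace.sphere_nonempty.2 zero_le_one).to_subtype

instance : IsProbabilityMeasure (sphereMeasure d) := by
  obtain ⟨θ⟩ : Nonempty (Metric.sphere (0 : EuclideanSpace ℝ (Fin d)) 1) := inferInstance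
  rw [← map_sphereProj_stdGaussian_euclidean θ]
  exact Measure.isProbabilityMeasure_map (by fun_prop)

theorem le_borellRatio_add_of_forall_dist_le {τ : ℝ} (hτ0 : 0 ≤ τ) (hτ : 0 ≤ 1 - τ ^ 2 / 2)
    {ρ : ℝ} (hρ0 : 0 ≤ ρ) (hρ1 : ρ < 1) {ι β : Type*} [Fintype ι] [Finite β]
    [MeasurableSpace β] [MeasurableSingletonClass β] {w : ι → ℝ}
    {h : ι → Metric.sphere (0 : EuclideanSpace ℝ (Fin d)) 1 → β} (hw : ∀ i, 0 ≤ w i)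
    (hsum : ∑ i, w i = 1) (hh : ∀ i, Measurable (h i))
    (hhalf : ∀ i t, (sphereMeasure d).real (h i ⁻¹' {t}) ≤ 1 / 2) {p₁ : ℝ}
    (hp₁ : ∀ p q, dist p q ≤ τ → p₁ ≤ ∑ i, w i * if h i p = h i q then 1 else 0) :
    p₁ ≤ borellRatio ρ
          (∑ i, w i * ((sphereMeasure d).prod (sphereMeasure d)).real {z | h i z.1 = h i z.2})
        + (correlatedGaussian (EuclideanSpace ℝ (Fin d)) ρ).real
            {z | alignmentExcess (1 - τ ^ 2 / 2) z ≤ 0} := by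
  obtain ⟨θ⟩ : Nonempty (Metric.sphere (0 : EuclideanSpace ℝ (Fin d)) 1) := inferInstance
  have hθ := measurable_sphereProj θ
  have hg (i : ι) : Measurable (h i ∘ sphereProj θ) := (hh i).comp hθ
  have hmap := map_sphereProj_stdGaussian_euclidean θ
  have hcollision := sum_mul_correlatedGaussian_collision_le hρ0 hρ1 hw hsum hg fun i t ↦ by
    rw [preimage_comp, ← map_measureReal_apply hθ (hh i (measurableSet_singleton t)), hmap]
    exact hhalf i t
  simp only [Function.comp_apply, measureReal_prod_collision_comp _ hθ (hh _), hmap]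
    at hcollision
  refine (le_sum_mul_measureReal_add hw (fun i ↦ measurableSet_collision (hg i))
    (measurable_alignmentExcess _ measurableSet_Iic) ?_ fun z hz ↦ ?_).trans
    (add_le_add hcollision le_rfl)
  · simpa [hsum] using hp₁ θ θ (by simpa using hτ0)
  · refine (hp₁ _ _ (dist_sphereProj_le θ hτ0 hτ (not_le.1 hz))).trans_eq ?_
    simp [indicator_apply]

end SphereMeasure

end LSH

theorem lsh_lower_bound_general (τ : ℝ) (hτ0 : 0 < τ) (hτ : τ < √2) (ε : ℝ) (hε : 0 < ε) :
    ∃ d₀ : ℕ, ∀ d : ℕ, d₀ ≤ d →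
      ∀ (ι β : Type*) [Fintype ι] [Finite β] [MeasurableSpace β] [MeasurableSingletonClass β]
        (w : ι → ℝ) (h : ι → Metric.sphere (0 : EuclideanSpace ℝ (Fin d)) 1 → β),
        (∀ i, 0 ≤ w i) → (∑ i, w i = 1) →
        (∀ i, Measurable (h i)) →
        (∀ i t, sphereMeasure d {x | h i x = t} ≤ 1 / 2) →
        ∀ η : ℝ,
          gaussTail η
            = ∑ i, w i *
                (((sphereMeasure d).prod (sphereMeasure d)) {uv | h i uv.1 = h i uv.2}).toReal →
        ∀ p₁ : ℝ,
          (∀ p q, dist p q ≤ τ → p₁ ≤ ∑ i, w i * (if h i p = h i q then (1 : ℝ) else 0)) →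
          p₁ ≤ lambdaFn τ η + ε := by
  have hτ2 : τ ^ 2 < 2 := (lt_sqrt hτ0.le).1 hτ
  have hρ₀ : 1 - τ ^ 2 / 2 ∈ Set.Ioo (-1) 1 := ⟨by linarith, by linarith [pow_pos hτ0 2]⟩
  obtain ⟨ρ, ⟨hρ₀ρ, hρ1⟩, hratio⟩ := LSH.exists_gt_forall_borellRatio_le_add hρ₀ (half_pos hε)
  have hρ0 : 0 ≤ ρ := by linarith
  have hconc := LSH.tendsto_measureReal_alignmentExcess_nonpos hρ₀ρ (pow_le_one₀ hρ0 hρ1.le)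
  obtain ⟨d₀, hd₀⟩ := Filter.eventually_atTop.1 (hconc.eventually_le_const (half_pos hε))
  refine ⟨max d₀ 1, fun d hd ι β _ _ _ _ w h hw hsum hh hhalf η hη p₁ hp₁ ↦ ?_⟩
  have : NeZero d := ⟨by lia⟩
  have hhalf' (i : ι) (t : β) : (sphereMeasure d).real (h i ⁻¹' {t}) ≤ 1 / 2 :=
    (ENNReal.toReal_mono (by simp) (hhalf i t)).trans_eq (by simp)
  have hp₂ : gaussTail η ∈ Set.Ioc 0 (1 / 2) :=
    ⟨LSH.gaussTail_pos η, hη.trans_le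
      (LSH.sum_mul_measureReal_prod_collision_le _ hw hsum hh hhalf')⟩
  calc p₁
    _ ≤ LSH.borellRatio ρ (gaussTail η) + ε / 2 := by
      rw [hη]
      exact (LSH.le_borellRatio_add_of_forall_dist_le hτ0.le (by linarith) hρ0 hρ1 hw hsum hh
        hhalf' hp₁).trans (add_le_add le_rfl (hd₀ d (by lia)))
    _ ≤ lambdaFn τ η + ε := by
      rw [LSH.lambdaFn_eq_borellRatio]
      linarith [hratio _ hp₂]

/-- Lower bound for LSH on the sphere: for `0 < τ < √2`, `T ≥ 1` and `ε > 0` there is `d₀`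
such that for all `d ≥ d₀` and every finitely supported family of hash functions on `S^{d-1}`
taking at most `T` values, all of whose level sets have measure at most `1/2`, if `η` satisfies
`Φ_c(η) = p₂* = Σᵢ wᵢ Pr_{u,v}[hᵢ(u) = hᵢ(v)]`, then any `p₁` that lower-bounds the collision
probability `Σᵢ wᵢ 1[hᵢ(p) = hᵢ(q)]` over all pairs at distance at most `τ` satisfies
`p₁ ≤ Λ(τ, η) + ε`. -/
theorem lsh_lower_bound (τ : ℝ) (hτ0 : 0 < τ) (hτ : τ < Real.sqrt 2)
    (T : ℕ) (hT : 1 ≤ T) (ε : ℝ) (hε : 0 < ε) :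
    ∃ d₀ : ℕ, ∀ d : ℕ, d₀ ≤ d →
      ∀ (m : ℕ) (w : Fin m → ℝ)
        (h : Fin m → (Metric.sphere (0 : EuclideanSpace ℝ (Fin d)) 1 → Fin T)),
        (∀ i, 0 ≤ w i) → (∑ i, w i = 1) →
        (∀ i, Measurable (h i)) →
        (∀ (i : Fin m) (t : Fin T), sphereMeasure d {x | h i x = t} ≤ 1 / 2) →
        ∀ η : ℝ,
          gaussTail η
            = ∑ i, w i *
                (((sphereMeasure d).prod (sphereMeasure d))
                  {uv | h i uv.1 = h i uv.2}).toReal →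
        ∀ p₁ : ℝ,
          (∀ p q : Metric.sphere (0 : EuclideanSpace ℝ (Fin d)) 1, dist p q ≤ τ →
            p₁ ≤ ∑ i, w i * (if h i p = h i q then (1 : ℝ) else 0)) →
          p₁ ≤ lambdaFn τ η + ε := by
  obtain ⟨d₀, hd₀⟩ := lsh_lower_bound_general τ hτ0 hτ ε hε
  refine ⟨d₀, fun d hd m w h hw hsum hh hhalf η hη p₁ hp₁ ↦ ?_⟩
  exact hd₀ d hd (Fin m) (Fin T) w h hw hsum hh hhalf η hη p₁ fun p q hpq ↦ by
    convert hp₁ p q hpq
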